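/- arXiv:1109.1200 — 2 statements merged into one kernel-verified Lean document; each statement's English description precedes it below -/
import Mathlib

section
/- Let H be an infinite-dimensional separable complex Hilbert space and W a symmetric countably syndetic subset of U(H). Let K be a balanced closed subspace of H such that G_K ⊆ W^24 and W^120 contains an open (in the strong operator topology relative to I_K) neighborhood of the identity in the setwise stabilizer I_K. Then for every infinite-dimensional closed subspace L ⊆ H there exist v ∈ W^64 and a closed subspace L' ⊆ L such that v(L') = K^⊥. -/
open Pointwise Topology

/-- The strong operator topology on the group of invertible linear isometries of `H`:
the topology of pointwise convergence on `H`. -/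
noncomputable def strongOperatorTopology (𝕜 H : Type*) [RCLike 𝕜] [NormedAddCommGroup H]
    [InnerProductSpace 𝕜 H] : TopologicalSpace (H ≃ₗᵢ[𝕜] H) :=
  TopologicalSpace.induced (fun u => (u : H → H)) Pi.topologicalSpace

/-- The pointwise stabilizer of a subspace `K` in the unitary group of `H`. -/
def pointwiseStabilizer {𝕜 H : Type*} [RCLike 𝕜] [NormedAddCommGroup H]
    [InnerProductSpace 𝕜 H] (K : Submodule 𝕜 H) : Set (H ≃ₗᵢ[𝕜] H) :=
  {u | ∀ x ∈ K, u x = x}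

/-- The setwise stabilizer of a subspace `K` in the unitary group of `H`. -/
def setwiseStabilizer {𝕜 H : Type*} [RCLike 𝕜] [NormedAddCommGroup H]
    [InnerProductSpace 𝕜 H] (K : Submodule 𝕜 H) : Set (H ≃ₗᵢ[𝕜] H) :=
  {u | K.map (u.toLinearEquiv : H →ₗ[𝕜] H) = K}

open scoped InnerProductSpace

section InnerProductSpace

variable {𝕜 H : Type*} [RCLike 𝕜] [NormedAddCommGroup H] [InnerProductSpace 𝕜 H]

/-- An infinite-dimensional subspace contains a unit vector orthogonal to any given finite set. -/
theorem exists_unit_mem_orthogonal_finset {V : Submodule 𝕜 H} (hV : ¬ FiniteDimensional 𝕜 V)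
    (s : Finset H) : ∃ x ∈ V, ‖x‖ = 1 ∧ ∀ y ∈ s, ⟪y, x⟫_𝕜 = 0 := by
  let φ : V →ₗ[𝕜] (s → 𝕜) := LinearMap.pi fun y => (innerₛₗ 𝕜 (y : H)).comp V.subtype
  have hφ : ¬ Function.Injective φ := fun h => hV (FiniteDimensional.of_injective φ h)
  rw [← LinearMap.ker_eq_bot, Submodule.eq_bot_iff] at hφ
  push Not at hφ
  obtain ⟨x, hx, hx0⟩ := hφ
  have hx0' : (x : H) ≠ 0 := by simpa using hx0
  refine ⟨((‖(x : H)‖⁻¹ : ℝ) : 𝕜) • (x : H), V.smul_mem _ x.2, ?_, fun y hy => ?_⟩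
  · rw [norm_smul]
    simp [hx0']
  · have := congrFun (LinearMap.mem_ker.1 hx) ⟨y, hy⟩
    rw [inner_smul_right]
    have h2 : ⟪y, (x : H)⟫_𝕜 = 0 := by simpa [φ] using this
    rw [h2, mul_zero]

/-- Two infinite-dimensional subspaces contain orthonormal sequences that are orthogonal
to each other. -/
theorem exists_orthonormal_pair {V V' : Submodule 𝕜 H} (hV : ¬ FiniteDimensional 𝕜 V)
    (hV' : ¬ FiniteDimensional 𝕜 V') :
    ∃ e f : ℕ → H, (∀ n, e n ∈ V) ∧ (∀ n, f n ∈ V') ∧ Orthonormal 𝕜 e ∧ Orthonormal 𝕜 f ∧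
      ∀ m n, ⟪e m, f n⟫_𝕜 = 0 := by
  classical
  obtain ⟨c, hc, hr⟩ := exists_seq_of_forall_finset_exists
    (fun p : H × H => p.1 ∈ V ∧ p.2 ∈ V' ∧ ‖p.1‖ = 1 ∧ ‖p.2‖ = 1 ∧ ⟪p.1, p.2⟫_𝕜 = 0)
    (fun p q => ⟪p.1, q.1⟫_𝕜 = 0 ∧ ⟪p.2, q.2⟫_𝕜 = 0 ∧ ⟪p.1, q.2⟫_𝕜 = 0 ∧ ⟪p.2, q.1⟫_𝕜 = 0)
    (by
      intro s _
      let t : Finset H := s.image Prod.fst ∪ s.image Prod.snd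
      have h1 : ∀ p ∈ s, p.1 ∈ t := fun p hp =>
        Finset.mem_union_left _ (Finset.mem_image_of_mem _ hp)
      have h2 : ∀ p ∈ s, p.2 ∈ t := fun p hp =>
        Finset.mem_union_right _ (Finset.mem_image_of_mem _ hp)
      obtain ⟨x, hx, hx1, hxt⟩ := exists_unit_mem_orthogonal_finset hV t
      obtain ⟨y, hy, hy1, hyt⟩ := exists_unit_mem_orthogonal_finset hV' (insert x t)
      have hyt' : ∀ z ∈ t, ⟪z, y⟫_𝕜 = 0 := fun z hz => hyt z (Finset.mem_insert_of_mem hz)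
      exact ⟨(x, y), ⟨hx, hy, hx1, hy1, hyt x (Finset.mem_insert_self _ _)⟩, fun p hp =>
        ⟨hxt _ (h1 p hp), hyt' _ (h2 p hp), hyt' _ (h1 p hp), hxt _ (h2 p hp)⟩⟩)
  refine ⟨fun n => (c n).1, fun n => (c n).2, fun n => (hc n).1, fun n => (hc n).2.1,
    ⟨fun n => (hc n).2.2.1, fun m n hmn => ?_⟩, ⟨fun n => (hc n).2.2.2.1, fun m n hmn => ?_⟩,
    fun m n => ?_⟩
  · rcases hmn.lt_or_gt with h | h
    · exact (hr m n h).1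
    · exact inner_eq_zero_symm.1 (hr n m h).1
  · rcases hmn.lt_or_gt with h | h
    · exact (hr m n h).2.1
    · exact inner_eq_zero_symm.1 (hr n m h).2.1
  · rcases lt_trichotomy m n with h | rfl | h
    · exact (hr m n h).2.2.1
    · exact (hc m).2.2.2.2
    · exact inner_eq_zero_symm.1 (hr n m h).2.2.2

/-- An orthonormal family in a separable space is countable. -/
theorem Orthonormal.countable [TopologicalSpace.SeparableSpace H] {ι : Type*} {v : ι → H}
    (hv : Orthonormal 𝕜 v) : Countable ι := by
  refine Pairwise.countable_of_isOpen_disjoint (s := fun i => Metric.ball (v i) (1 / 2)) ?_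
    (fun i => Metric.isOpen_ball) (fun i => Metric.nonempty_ball.2 (by norm_num))
  intro i j hij
  refine Metric.ball_disjoint_ball ?_
  have h := norm_sub_sq (𝕜 := 𝕜) (v i) (v j)
  rw [hv.2 hij, hv.1, hv.1] at h
  norm_num at h
  rw [dist_eq_norm]
  nlinarith [norm_nonneg (v i - v j)]

/-- Every unitary operator of `M` extends to a unitary operator of the whole space that
fixes `Mᗮ` pointwise. -/
theorem exists_extend_linearIsometryEquiv (M : Submodule 𝕜 H) [M.HasOrthogonalProjection]
    (U : M ≃ₗᵢ[𝕜] M) :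
    ∃ u : H ≃ₗᵢ[𝕜] H, (∀ x : M, u x = U x) ∧ ∀ x ∈ Mᗮ, u x = x := by
  refine ⟨M.orthogonalDecomposition.trans ((LinearIsometryEquiv.withLpProdCongr 2 U
    (LinearIsometryEquiv.refl 𝕜 Mᗮ)).trans M.orthogonalDecomposition.symm), fun x => ?_,
    fun x hx => ?_⟩
  · simp only [LinearIsometryEquiv.trans_apply]
    rw [LinearIsometryEquiv.symm_apply_eq]
    simp [Submodule.orthogonalDecomposition_apply,
      Submodule.orthogonalProjectionOnto_apply_of_mem_orthogonal (M.le_orthogonal_orthogonal x.2),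
      Submodule.orthogonalProjectionOnto_apply_of_mem_orthogonal
        (M.le_orthogonal_orthogonal (U x).2)]
  · simp only [LinearIsometryEquiv.trans_apply]
    rw [LinearIsometryEquiv.symm_apply_eq]
    simp [Submodule.orthogonalDecomposition_apply,
      Submodule.orthogonalProjectionOnto_apply_of_mem_orthogonal hx]

/-- A permutation of a Hilbert basis of `M` is realized by a unitary operator that
fixes `Mᗮ` pointwise. -/
theorem HilbertBasis.exists_perm_extend [CompleteSpace H] {M : Submodule 𝕜 H} [CompleteSpace M]
    {ι : Type*} (b : HilbertBasis ι 𝕜 M) (π : Equiv.Perm ι) :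
    ∃ u : H ≃ₗᵢ[𝕜] H, (∀ i, u (b i) = b (π i)) ∧ ∀ x ∈ Mᗮ, u x = x := by
  classical
  have hb : Orthonormal 𝕜 (b ∘ π) := b.orthonormal.comp π π.injective
  let c : HilbertBasis ι 𝕜 M := HilbertBasis.mk hb (by
    rw [π.surjective.range_comp, b.dense_span])
  obtain ⟨u, hu, hu'⟩ := exists_extend_linearIsometryEquiv M (b.repr.trans c.repr.symm)
  refine ⟨u, fun i => ?_, hu'⟩
  rw [hu, LinearIsometryEquiv.trans_apply, b.repr_self, c.repr_symm_single]
  simp [c]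

/-- The unitary that swaps `e i` and `f i` for `i ∈ s` and is the identity on everything
orthogonal to these vectors. -/
theorem exists_linearIsometryEquiv_swap [CompleteSpace H] {ι : Type*} {e f : ι → H}
    (he : Orthonormal 𝕜 e) (hf : Orthonormal 𝕜 f) (hef : ∀ i j, ⟪e i, f j⟫_𝕜 = 0) (s : Set ι) :
    ∃ g : H ≃ₗᵢ[𝕜] H, (∀ i ∈ s, g (e i) = f i ∧ g (f i) = e i) ∧
      (∀ i ∉ s, g (e i) = e i ∧ g (f i) = f i) ∧
      ∀ x, (∀ i, ⟪e i, x⟫_𝕜 = 0) → (∀ i, ⟪f i, x⟫_𝕜 = 0) → g x = x := by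
  classical
  have hfe : ∀ i j, ⟪f i, e j⟫_𝕜 = 0 := fun i j => inner_eq_zero_symm.1 (hef j i)
  let S : Submodule 𝕜 H := Submodule.span 𝕜 ((fun i => e i - f i) '' s)
  have hS : ∀ x, (∀ i ∈ s, ⟪e i - f i, x⟫_𝕜 = 0) → Sᗮ.reflection x = x := by
    intro x hx
    refine Submodule.reflection_mem_subspace_eq_self ?_
    rw [Submodule.mem_orthogonal]
    intro u hu
    induction hu using Submodule.span_induction with
    | mem u hu =>
      obtain ⟨i, hi, rfl⟩ := hu
      exact hx i hi
    | zero => simp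
    | add u v _ _ hu hv => rw [inner_add_left, hu, hv, add_zero]
    | smul a u _ hu => rw [inner_smul_left, hu, mul_zero]
  have hee := orthonormal_iff_ite.1 he
  have hff := orthonormal_iff_ite.1 hf
  refine ⟨Sᗮ.reflection, fun i hi => ?_, fun i hi => ⟨hS _ fun j hj => ?_, hS _ fun j hj => ?_⟩,
    fun x hx hx' => hS x fun i _ => ?_⟩
  · have h1 : Sᗮ.reflection (e i - f i) = -(e i - f i) :=
      Submodule.reflection_mem_subspace_orthogonalComplement_eq_neg
        (S.le_orthogonal_orthogonal (Submodule.subset_span ⟨i, hi, rfl⟩))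
    have h2 : Sᗮ.reflection (e i + f i) = e i + f i := by
      refine hS _ fun j _ => ?_
      simp [inner_sub_left, inner_add_right, hee, hff, hef, hfe]
    rw [map_sub] at h1
    rw [map_add] at h2
    have h3 : (2 : 𝕜) • Sᗮ.reflection (e i) = (2 : 𝕜) • f i := by
      rw [two_smul, two_smul]
      calc _ = (Sᗮ.reflection (e i) - Sᗮ.reflection (f i)) +
          (Sᗮ.reflection (e i) + Sᗮ.reflection (f i)) := by abel
        _ = _ := by rw [h1, h2]; abel
    have h4 : Sᗮ.reflection (e i) = f i := smul_right_injective H (two_ne_zero (α := 𝕜)) h3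
    refine ⟨h4, ?_⟩
    rw [h4] at h2
    rw [add_comm] at h2
    exact add_right_cancel h2
  · have hji : j ≠ i := fun h => hi (h ▸ hj)
    simp [inner_sub_left, hee, hfe, hji]
  · have hji : j ≠ i := fun h => hi (h ▸ hj)
    simp [inner_sub_left, hff, hef, hji]
  · rw [inner_sub_left, hx, hx', sub_zero]

/-- If `W` is symmetric and countably syndetic then `W ^ 2` contains an operator that swaps two
given orthonormal families along infinitely many common indices. -/
theorem exists_swap_mem_sq [CompleteSpace H] {W : Set (H ≃ₗᵢ[𝕜] H)} (hsym : W⁻¹ = W)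
    (hsynd : ∃ s : ℕ → (H ≃ₗᵢ[𝕜] H), ∀ g : (H ≃ₗᵢ[𝕜] H), ∃ n : ℕ, g ∈ s n • W)
    {e f : ℕ × ℕ → H} (he : Orthonormal 𝕜 e) (hf : Orthonormal 𝕜 f)
    (hef : ∀ i j, ⟪e i, f j⟫_𝕜 = 0) :
    ∃ D : Set ℕ, D.Nonempty ∧ ∃ g ∈ W ^ 2, (∀ p : ℕ × ℕ, p.1 ∈ D → g (e p) = f p) ∧
      (∀ p : ℕ × ℕ, p.1 ∉ D → g (e p) = e p) ∧
      ∀ x, (∀ i, ⟪e i, x⟫_𝕜 = 0) → (∀ i, ⟪f i, x⟫_𝕜 = 0) → g x = x := by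
  choose g hg hg' hgx using fun A : Set ℕ =>
    exists_linearIsometryEquiv_swap he hf hef (Prod.fst ⁻¹' A)
  obtain ⟨s, hs⟩ := hsynd
  choose n hn using fun A : Set ℕ => hs (g A)
  obtain ⟨A, B, hAB, hne⟩ : ∃ A B, n A = n B ∧ A ≠ B := by
    simpa [Function.Injective] using Function.cantor_injective n
  have hinv : ∀ x y, g A x = y → (g A)⁻¹ y = x := by
    rintro x y rfl
    exact (g A).symm_apply_apply x
  refine ⟨{k | ¬ (k ∈ A ↔ k ∈ B)}, ?_, (g A)⁻¹ * g B, ?_, fun p hp => ?_, fun p hp => ?_,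
    fun x hx hx' => ?_⟩
  · by_contra h
    refine hne (Set.ext fun k => ?_)
    by_contra hk
    exact h ⟨k, hk⟩
  · obtain ⟨w, hw, hwA⟩ := hn A
    obtain ⟨w', hw', hwB⟩ := hn B
    rw [pow_two]
    refine Set.mem_mul.2 ⟨w⁻¹, ?_, w', hw', ?_⟩
    · rw [← hsym]
      exact Set.inv_mem_inv.2 hw
    · rw [← hwA, ← hwB, hAB]
      simp only [smul_eq_mul]
      group
  · change (g A)⁻¹ (g B (e p)) = _
    by_cases hA : p.1 ∈ A
    · have hB : p.1 ∉ B := fun hB => hp (by simp [hA, hB])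
      rw [(hg' B p hB).1, hinv _ _ (hg A p hA).2]
    · have hB : p.1 ∈ B := by
        by_contra hB
        exact hp (by simp [hA, hB])
      rw [(hg B p hB).1, hinv _ _ (hg' A p hA).2]
  · change (g A)⁻¹ (g B (e p)) = _
    have hp' : p.1 ∈ A ↔ p.1 ∈ B := not_not.1 hp
    by_cases hA : p.1 ∈ A
    · rw [(hg B p (hp'.1 hA)).1, hinv _ _ (hg A p hA).1]
    · rw [(hg' B p fun hB => hA (hp'.2 hB)).1, hinv _ _ (hg' A p hA).1]
  · change (g A)⁻¹ (g B x) = _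
    rw [hgx B x hx hx', hinv _ _ (hgx A x hx hx')]

end InnerProductSpace

/-- In a countable type, any two infinite co-infinite sets are related by a permutation. -/
theorem exists_perm_mem_iff {ι : Type*} [Countable ι] {X Y : Set ι} (hX : X.Infinite)
    (hXc : Xᶜ.Infinite) (hY : Y.Infinite) (hYc : Yᶜ.Infinite) :
    ∃ π : Equiv.Perm ι, ∀ i ∈ X, π i ∈ Y := by
  classical
  have := hX.to_subtype
  have := hXc.to_subtype
  have := hY.to_subtype
  have := hYc.to_subtype
  obtain ⟨a⟩ := nonempty_equiv_of_countable (α := X) (β := Y)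
  obtain ⟨c⟩ := nonempty_equiv_of_countable (α := (Xᶜ : Set ι)) (β := (Yᶜ : Set ι))
  refine ⟨Equiv.subtypeCongr (p := (· ∈ X)) (q := (· ∈ Y)) a c, fun i hi => ?_⟩
  simp [Equiv.subtypeCongr, hi]

/-- Let `H` be an infinite-dimensional separable complex Hilbert space, `W` a symmetric
countably syndetic subset of `U(H)`, and `K` a balanced closed subspace of `H` such that
`G_K ⊆ W ^ 24` and `W ^ 120` contains a relatively open neighborhood of the identity in
the setwise stabilizer `I_K`. Then for every infinite-dimensional closed subspace `L ⊆ H`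
there exist `v ∈ W ^ 64` and a closed subspace `L' ⊆ L` with `v(L') = Kᗮ`. -/
theorem exists_transporter_to_orthogonal_complement
    {H : Type*} [NormedAddCommGroup H] [InnerProductSpace ℂ H] [CompleteSpace H]
    [TopologicalSpace.SeparableSpace H] (hinf : ¬ FiniteDimensional ℂ H)
    (W : Set (H ≃ₗᵢ[ℂ] H)) (hsym : W⁻¹ = W)
    (hsynd : ∃ s : ℕ → (H ≃ₗᵢ[ℂ] H), ∀ g : (H ≃ₗᵢ[ℂ] H), ∃ n : ℕ, g ∈ s n • W)
    (K : Submodule ℂ H) (hKc : IsClosed (K : Set H))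
    (hKinf : ¬ FiniteDimensional ℂ K) (hKpinf : ¬ FiniteDimensional ℂ Kᗮ)
    (hGK : pointwiseStabilizer K ⊆ W ^ 24)
    (hIK : ∃ O : Set (H ≃ₗᵢ[ℂ] H), O ⊆ setwiseStabilizer K ∧ O ⊆ W ^ 120 ∧ 1 ∈ O ∧
      ∃ Ω : Set (H ≃ₗᵢ[ℂ] H), IsOpen[strongOperatorTopology ℂ H] Ω ∧
        O = Ω ∩ setwiseStabilizer K)
    (L : Submodule ℂ H) (hLc : IsClosed (L : Set H)) (hLinf : ¬ FiniteDimensional ℂ L) :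
    ∃ v ∈ W ^ 64, ∃ L' : Submodule ℂ H, L' ≤ L ∧ IsClosed (L' : Set H) ∧
      L'.map (v.toLinearEquiv : H →ₗ[ℂ] H) = Kᗮ := by
  classical
  set M : Submodule ℂ H := Kᗮ with hM
  have hKM : ∀ x ∈ K, x ∈ Mᗮ := fun x hx => K.le_orthogonal_orthogonal hx
  have hsymn : ∀ n : ℕ, ∀ g ∈ W ^ n, g⁻¹ ∈ W ^ n := by
    intro n g hg
    rw [← hsym, inv_pow]
    exact Set.inv_mem_inv.2 hg
  obtain ⟨e, f', heM, hfL, he, hf', hef'⟩ : ∃ e f' : ℕ × ℕ → H, (∀ p, e p ∈ M) ∧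
      (∀ p, f' p ∈ L) ∧ Orthonormal ℂ e ∧ Orthonormal ℂ f' ∧ ∀ p q, ⟪e p, f' q⟫_ℂ = 0 := by
    obtain ⟨e, f, h1, h2, h3, h4, h5⟩ := exists_orthonormal_pair hKpinf hLinf
    have hinj := Nat.pairEquiv.injective
    exact ⟨e ∘ Nat.pairEquiv, f ∘ Nat.pairEquiv, fun p => h1 _, fun p => h2 _, h3.comp _ hinj,
      h4.comp _ hinj, fun p q => h5 _ _⟩
  obtain ⟨f, hfK, hf⟩ : ∃ f : ℕ × ℕ → H, (∀ p, f p ∈ K) ∧ Orthonormal ℂ f := by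
    obtain ⟨f, -, h1, -, h3, -⟩ := exists_orthonormal_pair hKinf hKinf
    exact ⟨f ∘ Nat.pairEquiv, fun p => h1 _, h3.comp _ Nat.pairEquiv.injective⟩
  have hfM : ∀ p, ∀ x ∈ M, ⟪f p, x⟫_ℂ = 0 := fun p x hx =>
    Submodule.inner_right_of_mem_orthogonal (hfK p) hx
  -- rows `0` and `1` of `e` are kept out of the swap with vectors of `K`
  let sh : ℕ × ℕ → ℕ × ℕ := Prod.map (· + 2) id
  have hsh : Function.Injective sh :=
    Function.Injective.prodMap (add_left_injective 2) Function.injective_id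
  obtain ⟨D₁, ⟨n₁, hn₁⟩, g₁, hg₁W, hg₁, -, -⟩ := exists_swap_mem_sq hsym hsynd he hf' hef'
  obtain ⟨D₂, ⟨n₂, hn₂⟩, g₂, hg₂W, hg₂, hg₂', hg₂x⟩ :=
    exists_swap_mem_sq hsym hsynd (he.comp sh hsh) hf
      (fun p q => inner_eq_zero_symm.1 (hfM q _ (heM _)))
  obtain ⟨ι, b, j, hj, hje⟩ : ∃ (ι : Set M) (b : HilbertBasis ι ℂ M) (j : ℕ × ℕ → ι),
      Function.Injective j ∧ ∀ p, (b (j p) : H) = e p := by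
    let e' : ℕ × ℕ → M := fun p => ⟨e p, heM p⟩
    have he' : Orthonormal ℂ e' := ⟨fun p => he.1 p, fun p q h => he.2 h⟩
    obtain ⟨w, b, hw, hb⟩ := he'.toSubtypeRange.exists_hilbertBasis_extension
    refine ⟨w, b, fun p => ⟨e' p, hw ⟨p, rfl⟩⟩, fun p q h => ?_, fun p => by simp [hb, e']⟩
    exact he'.linearIndependent.injective (congrArg Subtype.val h)
  have hcount : Countable ι := b.orthonormal.countable
  have horth : ∀ p i, i ≠ j p → ⟪e p, (b i : H)⟫_ℂ = 0 := by
    intro p i hi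
    rw [← hje, ← Submodule.coe_inner]
    exact b.orthonormal.2 hi.symm
  have hrow : ∀ n, (Set.range fun m => j (n, m)).Infinite := fun n =>
    Set.infinite_range_of_injective fun m m' h => congrArg Prod.snd (hj h)
  have hrow_ne : ∀ {n n' : ℕ}, n ≠ n' →
      (Set.range fun m => j (n, m)) ⊆ (Set.range fun m => j (n', m))ᶜ := by
    rintro n n' h _ ⟨m, rfl⟩ ⟨m', hm⟩
    exact h (congrArg Prod.fst (hj hm)).symm
  let A : Set ι := (fun p => j (sh p)) '' (Prod.fst ⁻¹' D₂)
  have hrowA : ∀ n < 2, (Set.range fun m => j (n, m)) ⊆ Aᶜ := by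
    rintro n hn _ ⟨m, rfl⟩ ⟨p, -, hp⟩
    have := congrArg Prod.fst (hj hp)
    simp [sh] at this
    omega
  have hA : A.Infinite := (hrow (n₂ + 2)).mono (by
    rintro _ ⟨m, rfl⟩
    exact ⟨(n₂, m), hn₂, rfl⟩)
  have hg₂A : ∀ i ∉ A, g₂ (b i) = b i := by
    intro i hi
    by_cases h : ∃ p, i = j (sh p)
    · obtain ⟨p, rfl⟩ := h
      rw [hje]
      exact hg₂' p fun hp => hi ⟨p, hp, rfl⟩
    · push Not at h
      exact hg₂x _ (fun p => horth _ _ (h p)) (fun p => hfM p _ (b i).2)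
  -- `π` squeezes the complement of `A` into row `0`
  obtain ⟨π, hπ⟩ := exists_perm_mem_iff (X := Aᶜ) (Y := Set.range fun m => j (0, m))
    ((hrow 0).mono (hrowA 0 (by norm_num))) (by rwa [compl_compl]) (hrow 0)
    ((hrow 1).mono (hrow_ne one_ne_zero))
  -- `π'` moves `A` and row `0` into row `n₁`
  obtain ⟨π', hπ'⟩ := exists_perm_mem_iff (X := A ∪ Set.range fun m => j (0, m))
    (Y := Set.range fun m => j (n₁, m)) (hA.mono Set.subset_union_left)
    ((hrow 1).mono (by
      rw [Set.compl_union]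
      exact Set.subset_inter (hrowA 1 (by norm_num)) (hrow_ne one_ne_zero)))
    (hrow n₁) ((hrow (n₁ + 1)).mono (hrow_ne (by simp)))
  obtain ⟨u, hu, huM⟩ := b.exists_perm_extend π
  obtain ⟨u', hu', huM'⟩ := b.exists_perm_extend π'
  have huW : u ∈ W ^ 24 := hGK fun x hx => huM x (hKM x hx)
  have huW' : u' ∈ W ^ 24 := hGK fun x hx => huM' x (hKM x hx)
  have hinv : ∀ x y, g₂ x = y → g₂⁻¹ y = x := by
    rintro x y rfl
    exact g₂.symm_apply_apply x
  have key : ∀ i ∈ A ∪ Set.range fun m => j (0, m), g₁ (u' (b i)) ∈ L := by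
    intro i hi
    obtain ⟨m, hm⟩ := hπ' i hi
    rw [hu', ← hm, hje, hg₁ _ hn₁]
    exact hfL _
  let w : H ≃ₗᵢ[ℂ] H := g₁ * u' * g₂⁻¹ * u * g₂
  have hwb : ∀ i, w (b i) ∈ L := by
    intro i
    change g₁ (u' (g₂⁻¹ (u (g₂ (b i))))) ∈ L
    by_cases hi : i ∈ A
    · have hiA := hi
      obtain ⟨p, hp, rfl⟩ := hi
      have h1 : g₂ (b (j (sh p))) = f p := by
        rw [hje]
        exact hg₂ p hp
      rw [h1, huM _ (hKM _ (hfK p)), hinv _ _ h1]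
      exact key _ (Or.inl hiA)
    · have h0 := hπ i hi
      rw [hg₂A i hi, hu, hinv _ _ (hg₂A _ (hrowA 0 (by norm_num) h0))]
      exact key _ (Or.inr h0)
  have hwM : ∀ x ∈ M, w x ∈ L := by
    let N : Submodule ℂ M := L.comap ((w.toLinearEquiv : H →ₗ[ℂ] H).comp M.subtype)
    have hN : IsClosed (N : Set M) :=
      hLc.preimage (w.continuous.comp continuous_subtype_val)
    have hspan : Submodule.span ℂ (Set.range b) ≤ N :=
      Submodule.span_le.2 (by rintro _ ⟨i, rfl⟩; exact hwb i)
    have htop : (⊤ : Submodule ℂ M) ≤ N :=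
      b.dense_span ▸ Submodule.topologicalClosure_minimal _ hspan hN
    exact fun x hx => htop (Submodule.mem_top (x := ⟨x, hx⟩))
  have hw54 : w ∈ W ^ 54 := by
    have h := Set.mul_mem_mul (Set.mul_mem_mul (Set.mul_mem_mul (Set.mul_mem_mul hg₁W huW')
      (hsymn 2 _ hg₂W)) huW) hg₂W
    simpa only [← pow_add] using h
  have hone : (1 : H ≃ₗᵢ[ℂ] H) ∈ W ^ 10 := by
    obtain ⟨a, ha, -⟩ := Set.mem_mul.1 (pow_two W ▸ hg₂W)
    have h : (1 : H ≃ₗᵢ[ℂ] H) ∈ W ^ 2 := by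
      rw [pow_two, ← inv_mul_cancel a]
      exact Set.mul_mem_mul (hsym ▸ Set.inv_mem_inv.2 ha) ha
    have h5 := Set.pow_mem_pow h (n := 5)
    rwa [one_pow, ← pow_mul] at h5
  have hw64 : w ∈ W ^ 64 := by
    have h := Set.mul_mem_mul hw54 hone
    rwa [mul_one, ← pow_add] at h
  refine ⟨w⁻¹, hsymn _ _ hw64, M.map (w.toLinearEquiv : H →ₗ[ℂ] H), ?_, ?_, ?_⟩
  · rintro _ ⟨x, hx, rfl⟩
    exact hwM x hx
  · have hMc : IsClosed (M : Set H) := K.isClosed_orthogonal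
    have := w.toHomeomorph.isClosedMap _ hMc
    simpa using this
  · ext x
    constructor
    · rintro ⟨_, ⟨y, hy, rfl⟩, rfl⟩
      have : w⁻¹ (w y) = y := w.symm_apply_apply y
      simpa [this] using hy
    · exact fun hx => ⟨w x, ⟨x, hx, rfl⟩, w.symm_apply_apply x⟩
end

section
/- Let H be an infinite-dimensional separable complex Hilbert space and W a symmetric countably syndetic subset of U(H). Then there exists ε > 0 such that the open ball B_ε = {u ∈ U(H) : ‖u − 1‖ < ε} in the operator norm is contained in W^496. -/
open Pointwise
open scoped InnerProductSpace

section Gram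

variable {H : Type*} [NormedAddCommGroup H] [InnerProductSpace ℂ H]

theorem mem_orthogonal_span_range_iff {ι : Type*} {a : ι → H} {v : H} :
    v ∈ (Submodule.span ℂ (Set.range a))ᗮ ↔ ∀ i, ⟪a i, v⟫_ℂ = 0 := by
  refine ⟨fun hv i => (Submodule.mem_orthogonal _ _).1 hv _ (Submodule.subset_span ⟨i, rfl⟩),
    fun hv => ?_⟩
  have : Submodule.span ℂ (Set.range a) ≤ (ℂ ∙ v)ᗮ := by
    rw [Submodule.span_le]
    rintro _ ⟨i, rfl⟩
    exact Submodule.mem_orthogonal_singleton_iff_inner_left.2 (hv i)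
  exact (Submodule.mem_orthogonal _ _).2 fun x hx =>
    Submodule.mem_orthogonal_singleton_iff_inner_left.1 (this hx)

theorem Orthonormal.countable_of_separableSpace [TopologicalSpace.SeparableSpace H] {ι : Type*}
    {v : ι → H} (hv : Orthonormal ℂ v) : Countable ι := by
  have hd : Pairwise (Function.onFun Disjoint fun i => Metric.ball (v i) (1 / 2)) := by
    intro i j hij
    refine Metric.ball_disjoint_ball ?_
    have h2 : ‖v i - v j‖ ^ 2 = 2 := by
      rw [@norm_sub_sq ℂ, hv.2 hij, hv.1, hv.1]; norm_num
    rw [dist_eq_norm]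
    nlinarith [norm_nonneg (v i - v j)]
  exact hd.countable_of_isOpen_disjoint (fun _ => Metric.isOpen_ball)
    fun i => ⟨v i, Metric.mem_ball_self (by norm_num)⟩

theorem exists_hilbertBasis_of_not_finiteDimensional [CompleteSpace H]
    [TopologicalSpace.SeparableSpace H] (hinf : ¬ FiniteDimensional ℂ H)
    (ι : Type*) [Countable ι] [Infinite ι] : Nonempty (HilbertBasis ι ℂ H) := by
  obtain ⟨w, b, -⟩ := exists_hilbertBasis ℂ H
  have hc : Countable w := b.orthonormal.countable_of_separableSpace
  have hi : Infinite w := by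
    by_contra hfin
    rw [not_infinite_iff_finite] at hfin
    have := Fintype.ofFinite w
    exact hinf b.toOrthonormalBasis.toBasis.finiteDimensional_of_finite
  obtain ⟨e⟩ : Nonempty (ι ≃ w) := nonempty_equiv_of_countable
  refine ⟨HilbertBasis.mkOfOrthogonalEqBot (v := b ∘ e) (b.orthonormal.comp e e.injective) ?_⟩
  rw [e.surjective.range_comp, ← Submodule.topologicalClosure_eq_top_iff]
  exact b.dense_span

/-- A family of vectors whose orthogonal complement is infinite-dimensional. -/
def HasInfiniteCodim {ι : Type*} (a : ι → H) : Prop :=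
  ∃ v : ℕ → H, Orthonormal ℂ v ∧ ∀ i n, ⟪a i, v n⟫_ℂ = 0

theorem inner_linearCombination_eq {ι : Type*} {a b : ι → H}
    (hab : ∀ i j, ⟪a i, a j⟫_ℂ = ⟪b i, b j⟫_ℂ) (x : ι →₀ ℂ) :
    ‖Finsupp.linearCombination ℂ b x‖ = ‖Finsupp.linearCombination ℂ a x‖ := by
  rw [@norm_eq_sqrt_re_inner ℂ, @norm_eq_sqrt_re_inner ℂ]
  simp only [Finsupp.linearCombination_apply, Finsupp.sum, sum_inner, inner_sum, inner_smul_left,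
    inner_smul_right, hab]

theorem exists_unitary_of_inner_eq_of_dense [CompleteSpace H] {ι : Type*} {a b : ι → H}
    (hab : ∀ i j, ⟪a i, a j⟫_ℂ = ⟪b i, b j⟫_ℂ)
    (ha : ∀ v, (∀ i, ⟪a i, v⟫_ℂ = 0) → v = 0) (hb : ∀ v, (∀ i, ⟪b i, v⟫_ℂ = 0) → v = 0) :
    ∃ u : H ≃ₗᵢ[ℂ] H, ∀ i, u (a i) = b i := by
  have hdense : ∀ c : ι → H, (∀ v, (∀ i, ⟪c i, v⟫_ℂ = 0) → v = 0) →
      DenseRange (Finsupp.linearCombination ℂ c) := by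
    intro c hc
    have h : (LinearMap.range (Finsupp.linearCombination ℂ c)).topologicalClosure = ⊤ := by
      rw [Submodule.topologicalClosure_eq_top_iff, Submodule.eq_bot_iff]
      intro v hv
      refine hc v fun i => ?_
      exact (Submodule.mem_orthogonal _ _).1 hv _ ⟨Finsupp.single i 1, by simp⟩
    exact (Submodule.dense_iff_topologicalClosure_eq_top.2 h)
  refine ⟨(LinearEquiv.refl ℂ (ι →₀ ℂ)).extendOfIsometry (Finsupp.linearCombination ℂ a)
    (Finsupp.linearCombination ℂ b) (hdense a ha) (hdense b hb)
    (fun x => inner_linearCombination_eq hab x), fun i => ?_⟩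
  have := (LinearEquiv.refl ℂ (ι →₀ ℂ)).extendOfIsometry_eq (Finsupp.linearCombination ℂ a)
    (Finsupp.linearCombination ℂ b) (hdense a ha) (hdense b hb)
    (fun x => inner_linearCombination_eq hab x) (Finsupp.single i 1)
  simpa using this

theorem HasInfiniteCodim.not_finiteDimensional {ι : Type*} {a : ι → H} (ha : HasInfiniteCodim a) :
    ¬ FiniteDimensional ℂ (Submodule.span ℂ (Set.range a))ᗮ := by
  obtain ⟨v, hv, hav⟩ := ha
  have hmem : ∀ n, v n ∈ (Submodule.span ℂ (Set.range a))ᗮ := fun n =>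
    mem_orthogonal_span_range_iff.2 fun i => hav i n
  intro hfd
  have hli : LinearIndependent ℂ fun n => (⟨v n, hmem n⟩ : (Submodule.span ℂ (Set.range a))ᗮ) :=
    LinearIndependent.of_comp (Submodule.subtype _)
      (by simpa [Function.comp_def] using! hv.linearIndependent)
  have := hli.finite
  exact not_finite ℕ

theorem HasInfiniteCodim.exists_hilbertBasis [CompleteSpace H] [TopologicalSpace.SeparableSpace H]
    {ι : Type*} {a : ι → H} (ha : HasInfiniteCodim a) :
    Nonempty (HilbertBasis ℕ ℂ (Submodule.span ℂ (Set.range a))ᗮ) :=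
  exists_hilbertBasis_of_not_finiteDimensional ha.not_finiteDimensional ℕ

theorem exists_unitary_of_inner_eq [CompleteSpace H] [TopologicalSpace.SeparableSpace H]
    {ι : Type*} {a b : ι → H} (hab : ∀ i j, ⟪a i, a j⟫_ℂ = ⟪b i, b j⟫_ℂ)
    (ha : HasInfiniteCodim a) (hb : HasInfiniteCodim b) :
    ∃ u : H ≃ₗᵢ[ℂ] H, ∀ i, u (a i) = b i := by
  obtain ⟨p⟩ := ha.exists_hilbertBasis
  obtain ⟨q⟩ := hb.exists_hilbertBasis
  have horth : ∀ (c : ι → H) (r : HilbertBasis ℕ ℂ (Submodule.span ℂ (Set.range c))ᗮ) (i n),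
      ⟪c i, (r n : H)⟫_ℂ = 0 := fun c r i n =>
    mem_orthogonal_span_range_iff.1 (r n).2 i
  have htotal : ∀ (c : ι → H) (r : HilbertBasis ℕ ℂ (Submodule.span ℂ (Set.range c))ᗮ) (v : H),
      (∀ i : ι ⊕ ℕ, ⟪Sum.elim c (fun n => (r n : H)) i, v⟫_ℂ = 0) → v = 0 := by
    intro c r v hv
    have hmem : v ∈ (Submodule.span ℂ (Set.range c))ᗮ :=
      mem_orthogonal_span_range_iff.2 fun i => hv (Sum.inl i)
    have h0 : r.repr ⟨v, hmem⟩ = 0 := by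
      ext n
      rw [r.repr_apply_apply]
      exact hv (Sum.inr n)
    have := r.repr.map_eq_zero_iff.1 h0
    exact congrArg Subtype.val this
  have hon : ∀ (c : ι → H) (r : HilbertBasis ℕ ℂ (Submodule.span ℂ (Set.range c))ᗮ) (m n),
      ⟪(r m : H), (r n : H)⟫_ℂ = if m = n then 1 else 0 := fun c r m n =>
    orthonormal_iff_ite.1 r.orthonormal m n
  obtain ⟨u, hu⟩ := exists_unitary_of_inner_eq_of_dense
    (a := Sum.elim a fun n => (p n : H)) (b := Sum.elim b fun n => (q n : H)) (by
      rintro (i | m) (j | n)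
      · exact hab i j
      · simp [horth]
      · simp [inner_eq_zero_symm.1 (horth a p j m), inner_eq_zero_symm.1 (horth b q j m)]
      · simp [hon]) (htotal a p) (htotal b q)
  exact ⟨u, fun i => hu (Sum.inl i)⟩

theorem hasInfiniteCodim_of_finiteDimensional [CompleteSpace H]
    [TopologicalSpace.SeparableSpace H] (hinf : ¬ FiniteDimensional ℂ H) (F : Submodule ℂ H)
    [FiniteDimensional ℂ F] {ι : Type*} {a : ι → H} (ha : ∀ i, a i ∈ F) : HasInfiniteCodim a := by
  have hF : ¬ FiniteDimensional ℂ Fᗮ := by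
    intro h
    have : FiniteDimensional ℂ (F ⊔ Fᗮ : Submodule ℂ H) := Submodule.finiteDimensional_sup _ _
    rw [Submodule.sup_orthogonal_of_hasOrthogonalProjection] at this
    exact hinf (Submodule.topEquiv.finiteDimensional)
  obtain ⟨r⟩ := exists_hilbertBasis_of_not_finiteDimensional hF ℕ
  exact ⟨fun n => (r n : H), r.orthonormal.comp_linearIsometry Fᗮ.subtypeₗᵢ, fun i n =>
    (Submodule.mem_orthogonal _ _).1 (r n).2 _ (ha i)⟩

end Gram

section Decomposition

variable {H : Type*} [NormedAddCommGroup H] [InnerProductSpace ℂ H]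

/-- A family of isometric copies of `H` inside `H` which are pairwise orthogonal and total. -/
structure IsIsometricDecomposition {I : Type*} (e : I → H →ₗᵢ[ℂ] H) : Prop where
  inner_eq_zero : ∀ {i j}, i ≠ j → ∀ x y, ⟪e i x, e j y⟫_ℂ = 0
  eq_zero : ∀ v, (∀ i x, ⟪e i x, v⟫_ℂ = 0) → v = 0

theorem HilbertBasis.eq_zero_of_inner_eq_zero {I : Type*} (b : HilbertBasis I ℂ H) {v : H}
    (hv : ∀ i, ⟪b i, v⟫_ℂ = 0) : v = 0 := by
  refine b.repr.map_eq_zero_iff.1 ?_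
  ext i
  rw [b.repr_apply_apply]
  exact hv i

theorem exists_isIsometricDecomposition [CompleteSpace H] [TopologicalSpace.SeparableSpace H]
    (hinf : ¬ FiniteDimensional ℂ H) (I : Type*) [Countable I] [Nonempty I] :
    ∃ e : I → H →ₗᵢ[ℂ] H, IsIsometricDecomposition e := by
  classical
  obtain ⟨p⟩ := exists_hilbertBasis_of_not_finiteDimensional hinf ℕ
  obtain ⟨b⟩ := exists_hilbertBasis_of_not_finiteDimensional hinf (I × ℕ)
  have hon : ∀ i, Orthonormal ℂ fun n => b (i, n) := fun i =>
    b.orthonormal.comp (fun n => (i, n)) (Prod.mk_right_injective i)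
  let e : I → H →ₗᵢ[ℂ] H := fun i =>
    (hon i).orthogonalFamily.linearIsometry.comp p.repr.toLinearIsometry
  have hep : ∀ i n, e i (p n) = b (i, n) := by
    intro i n
    change (hon i).orthogonalFamily.linearIsometry (p.repr (p n)) = _
    rw [p.repr_self, OrthogonalFamily.linearIsometry_apply_single]
    simp
  have hzero : ∀ i v, (∀ n, ⟪b (i, n), v⟫_ℂ = 0) → ∀ x, ⟪e i x, v⟫_ℂ = 0 := by
    intro i v hv x
    have h0 : ContinuousLinearMap.adjoint (e i).toContinuousLinearMap v = 0 := by
      refine p.eq_zero_of_inner_eq_zero fun n => ?_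
      rw [ContinuousLinearMap.adjoint_inner_right]
      change ⟪e i (p n), v⟫_ℂ = 0
      rw [hep, hv]
    have := ContinuousLinearMap.adjoint_inner_right (e i).toContinuousLinearMap x v
    rw [h0, inner_zero_right] at this
    exact this.symm
  refine ⟨e, fun {i j} hij x y => hzero i _ (fun n => ?_) x, fun v hv => ?_⟩
  · rw [inner_eq_zero_symm]
    refine hzero j _ (fun m => ?_) y
    exact b.orthonormal.2 fun h => hij (congrArg Prod.fst h).symm
  · refine b.eq_zero_of_inner_eq_zero fun ⟨i, n⟩ => ?_
    rw [← hep, hv]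

namespace IsIsometricDecomposition

variable {I : Type*} {e : I → H →ₗᵢ[ℂ] H}

theorem exists_monomial [CompleteSpace H] (he : IsIsometricDecomposition e) (π : Equiv.Perm I)
    (T : I → H ≃ₗᵢ[ℂ] H) : ∃ u : H ≃ₗᵢ[ℂ] H, ∀ i x, u (e i x) = e (π i) (T i x) := by
  obtain ⟨u, hu⟩ := exists_unitary_of_inner_eq_of_dense
    (a := fun k : I × H => e k.1 k.2) (b := fun k : I × H => e (π k.1) (T k.1 k.2)) (by
      rintro ⟨i, x⟩ ⟨j, y⟩
      by_cases hij : i = j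
      · subst hij; simp
      · rw [he.inner_eq_zero hij, he.inner_eq_zero (π.injective.ne hij)])
    (fun v hv => he.eq_zero v fun i x => hv (i, x))
    (fun v hv => he.eq_zero v fun i x => by simpa using hv (π.symm i, (T (π.symm i)).symm x))
  exact ⟨u, fun i x => hu (i, x)⟩

theorem ext (he : IsIsometricDecomposition e) {u u' : H ≃ₗᵢ[ℂ] H}
    (h : ∀ i x, u (e i x) = u' (e i x)) : u = u' := by
  ext v
  have h0 : u.symm (u v - u' v) = 0 := by
    refine he.eq_zero _ fun i x => ?_
    rw [← u.inner_map_map, u.apply_symm_apply, inner_sub_right, u.inner_map_map, h,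
      u'.inner_map_map, sub_self]
  rwa [u.symm.map_eq_zero_iff, sub_eq_zero] at h0

theorem map_eq_self (he : IsIsometricDecomposition e) {A : Set I} {g : H ≃ₗᵢ[ℂ] H}
    (hfix : ∀ i ∉ A, ∀ x, g (e i x) = e i x)
    (hinv : ∀ i ∈ A, ∀ x, ∃ j ∈ A, g.symm (e i x) = e j x)
    {v : H} (hv : ∀ i ∈ A, ∀ x, ⟪e i x, v⟫_ℂ = 0) : g v = v := by
  rw [← sub_eq_zero]
  refine he.eq_zero _ fun i x => ?_
  rw [inner_sub_right]
  by_cases hi : i ∈ A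
  · obtain ⟨j, hj, hgj⟩ := hinv i hi x
    rw [hv i hi, ← g.symm.inner_map_map, g.symm_apply_apply, hgj, hv j hj, sub_zero]
  · nth_rewrite 1 [← hfix i hi]
    rw [g.inner_map_map, sub_self]

end IsIsometricDecomposition

theorem exists_unitary_comp_eq_of_fixes_orthogonal [CompleteSpace H] (L : H →ₗᵢ[ℂ] H)
    {u : H ≃ₗᵢ[ℂ] H} (hu : ∀ v, (∀ x, ⟪L x, v⟫_ℂ = 0) → u v = v) :
    ∃ T : H ≃ₗᵢ[ℂ] H, ∀ x, u (L x) = L (T x) := by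
  have hrange : ∀ w : H ≃ₗᵢ[ℂ] H, (∀ v, (∀ x, ⟪L x, v⟫_ℂ = 0) → w v = v) →
      ∀ x, ∃ y, L y = w (L x) := by
    intro w hw x
    have hcl : IsClosed (LinearMap.range L.toLinearMap : Set H) := by
      rw [LinearMap.coe_range]
      exact L.isometry.isClosedEmbedding.isClosed_range
    have hmem : w (L x) ∈ (LinearMap.range L.toLinearMap)ᗮᗮ := by
      rw [Submodule.mem_orthogonal]
      intro v hv
      have hv' : ∀ y, ⟪L y, v⟫_ℂ = 0 := fun y =>
        (Submodule.mem_orthogonal _ _).1 hv _ (LinearMap.mem_range_self _ y)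
      rw [← hw v hv', w.inner_map_map, inner_eq_zero_symm, hv']
    rw [Submodule.orthogonal_orthogonal_eq_closure, hcl.submodule_topologicalClosure_eq] at hmem
    exact hmem
  have hu' : ∀ v, (∀ x, ⟪L x, v⟫_ℂ = 0) → u.symm v = v := fun v hv => by
    rw [u.symm_apply_eq, hu v hv]
  choose f hf using hrange u hu
  choose f' hf' using hrange u.symm hu'
  obtain ⟨T, hT⟩ := exists_unitary_of_inner_eq_of_dense (a := fun x : H => x) (b := f)
    (fun x y => by rw [← L.inner_map_map (f x), hf, hf, u.inner_map_map, L.inner_map_map])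
    (fun v hv => inner_self_eq_zero.1 (hv v)) (fun v hv => by
      have h : f (f' v) = v := L.injective (by rw [hf, hf', u.apply_symm_apply])
      have := hv (f' v)
      rwa [h, inner_self_eq_zero] at this)
  exact ⟨T, fun x => by rw [hT, hf]⟩

end Decomposition

section Syndetic

variable {G : Type*} [Group G] {W : Set G}

theorem inv_mem_pow_of_inv_eq (hsym : W⁻¹ = W) {n : ℕ} {g : G} (hg : g ∈ W ^ n) :
    g⁻¹ ∈ W ^ n := by
  rwa [← hsym, inv_pow, Set.inv_mem_inv]

theorem exists_inv_mul_mem_sq {ι : Type*} [Uncountable ι] {s : ℕ → G} (hsym : W⁻¹ = W)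
    (hs : ∀ g, ∃ n, g ∈ s n • W) (t : ι → G) :
    ∃ i j, i ≠ j ∧ (t i)⁻¹ * t j ∈ W ^ 2 := by
  choose n hn using fun i => hs (t i)
  obtain ⟨i, j, hij, hne⟩ := Function.not_injective_iff.1 (not_injective_uncountable_countable n)
  refine ⟨i, j, hne, ?_⟩
  obtain ⟨a, ha, hta⟩ := Set.mem_smul_set.1 (hn i)
  obtain ⟨b, hb, htb⟩ := Set.mem_smul_set.1 (hn j)
  rw [← hta, ← htb, hij, pow_two]
  refine Set.mem_mul.2 ⟨a⁻¹, hsym ▸ Set.inv_mem_inv.2 ha, b, hb, ?_⟩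
  simp [mul_assoc]

end Syndetic

theorem uncountable_set_nat : Uncountable (Set ℕ) := by
  rw [← not_countable_iff]
  intro h
  obtain ⟨f, hf⟩ := exists_surjective_nat (Set ℕ)
  exact Function.cantor_surjective f hf

section Shift

variable {H : Type*} [NormedAddCommGroup H] [InnerProductSpace ℂ H]

open Classical in
/-- The permutation of `ℕ × ℕ × ℤ` shifting the fibres over `(n, q)` with `q ∈ S`. -/
noncomputable def fiberShift (n : ℕ) (S : Set ℕ) : Equiv.Perm (ℕ × ℕ × ℤ) where
  toFun i := if i.1 = n ∧ i.2.1 ∈ S then (i.1, i.2.1, i.2.2 + 1) else i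
  invFun i := if i.1 = n ∧ i.2.1 ∈ S then (i.1, i.2.1, i.2.2 - 1) else i
  left_inv i := by
    obtain ⟨m, q, k⟩ := i
    dsimp only
    split_ifs <;> simp_all
  right_inv i := by
    obtain ⟨m, q, k⟩ := i
    dsimp only
    split_ifs <;> simp_all

theorem fiberShift_apply_of_ne {n m : ℕ} (hmn : m ≠ n) (S : Set ℕ) (j : ℕ × ℤ) :
    fiberShift n S (m, j) = (m, j) := by
  simp [fiberShift, hmn]

theorem fiberShift_apply_of_mem {n q : ℕ} {S : Set ℕ} (hq : q ∈ S) (k : ℤ) :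
    fiberShift n S (n, q, k) = (n, q, k + 1) := by
  simp [fiberShift, hq]

theorem fiberShift_apply_of_notMem {n q : ℕ} {S : Set ℕ} (hq : q ∉ S) (k : ℤ) :
    fiberShift n S (n, q, k) = (n, q, k) := by
  simp [fiberShift, hq]

theorem exists_fiberShift_inv_mul (n : ℕ) (S S' : Set ℕ) (q : ℕ) : ∃ δ : ℤ,
    ∀ k, (fiberShift n S)⁻¹ (fiberShift n S' (n, q, k)) = (n, q, k + δ) := by
  by_cases hq : q ∈ S <;> by_cases hq' : q ∈ S'
  · refine ⟨0, fun k => ?_⟩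
    rw [Equiv.Perm.inv_eq_iff_eq, fiberShift_apply_of_mem hq, fiberShift_apply_of_mem hq']
    simp
  · refine ⟨-1, fun k => ?_⟩
    rw [Equiv.Perm.inv_eq_iff_eq, fiberShift_apply_of_mem hq, fiberShift_apply_of_notMem hq']
    simp
  · refine ⟨1, fun k => ?_⟩
    rw [Equiv.Perm.inv_eq_iff_eq, fiberShift_apply_of_notMem hq, fiberShift_apply_of_mem hq']
  · refine ⟨0, fun k => ?_⟩
    rw [Equiv.Perm.inv_eq_iff_eq, fiberShift_apply_of_notMem hq, fiberShift_apply_of_notMem hq']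
    simp

variable [CompleteSpace H] {W : Set (H ≃ₗᵢ[ℂ] H)} {s : ℕ → H ≃ₗᵢ[ℂ] H}

theorem IsIsometricDecomposition.exists_block_full {J : Type*} {e : ℕ × J → H →ₗᵢ[ℂ] H}
    (he : IsIsometricDecomposition e) (hsym : W⁻¹ = W) (hs : ∀ g, ∃ n, g ∈ s n • W) :
    ∃ n, ∀ T : J → H ≃ₗᵢ[ℂ] H, ∃ D ∈ W ^ 2, ∀ j x, D (e (n, j) x) = e (n, j) (T j x) := by
  obtain ⟨n, hn⟩ : ∃ n, ∀ T : J → H ≃ₗᵢ[ℂ] H, ∃ w ∈ W, ∀ j x,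
      s n (w (e (n, j) x)) = e (n, j) (T j x) := by
    by_contra! h
    choose T hT using h
    obtain ⟨u, hu⟩ := he.exists_monomial 1 fun i => T i.1 i.2
    obtain ⟨n, hn⟩ := hs u
    obtain ⟨w, hw, rfl⟩ := Set.mem_smul_set.1 hn
    obtain ⟨j, x, h⟩ := hT n w hw
    exact h (hu (n, j) x)
  refine ⟨n, fun T => ?_⟩
  obtain ⟨w₁, hw₁, h₁⟩ := hn 1
  obtain ⟨w, hw, h⟩ := hn T
  refine ⟨w₁⁻¹ * w, ?_, fun j x => ?_⟩
  · rw [pow_two]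
    exact Set.mul_mem_mul (hsym ▸ Set.inv_mem_inv.2 hw₁) hw
  · change w₁.symm (w (e (n, j) x)) = _
    rw [w₁.symm_apply_eq]
    exact (s n).injective ((h j x).trans (h₁ j (T j x)).symm)

theorem exists_isometry_forall_mem_pow_eight [TopologicalSpace.SeparableSpace H]
    (hinf : ¬ FiniteDimensional ℂ H) (hsym : W⁻¹ = W) (hs : ∀ g, ∃ n, g ∈ s n • W) :
    ∃ L : H →ₗᵢ[ℂ] H, HasInfiniteCodim L ∧
      ∀ u : H ≃ₗᵢ[ℂ] H, (∀ v, (∀ x, ⟪L x, v⟫_ℂ = 0) → u v = v) → u ∈ W ^ 8 := by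
  classical
  obtain ⟨e, he⟩ := exists_isIsometricDecomposition hinf (ℕ × ℕ × ℤ)
  obtain ⟨n, hn⟩ := he.exists_block_full hsym hs
  choose t ht using fun S => he.exists_monomial (fiberShift n S) fun _ => 1
  have : Uncountable (Set ℕ) := uncountable_set_nat
  obtain ⟨S, S', q₀, hq₀, hq₀', hg⟩ : ∃ S S' q₀, q₀ ∉ S ∧ q₀ ∈ S' ∧ (t S)⁻¹ * t S' ∈ W ^ 2 := by
    obtain ⟨S, S', hne, hg⟩ := exists_inv_mul_mem_sq hsym hs t
    obtain ⟨q, ⟨h, h'⟩ | ⟨h, h'⟩⟩ := Set.symmDiff_nonempty.2 hne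
    · refine ⟨S', S, q, h', h, ?_⟩
      have := inv_mem_pow_of_inv_eq hsym hg
      rwa [mul_inv_rev, inv_inv] at this
    · exact ⟨S, S', q, h', h, hg⟩
  set g := (t S)⁻¹ * t S' with hgdef
  have hge : ∀ i x, g (e i x) = e ((fiberShift n S)⁻¹ (fiberShift n S' i)) x := by
    intro i x
    change (t S).symm (t S' (e i x)) = _
    rw [(t S).symm_apply_eq, ht, ht]
    simp
  have hgne : ∀ i : ℕ × ℕ × ℤ, i.1 ≠ n → (fiberShift n S)⁻¹ (fiberShift n S' i) = i := by
    rintro ⟨m, j⟩ hm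
    rw [Equiv.Perm.inv_eq_iff_eq, fiberShift_apply_of_ne hm, fiberShift_apply_of_ne hm]
  refine ⟨e (n, q₀, 1), ?_, fun u hu => ?_⟩
  · obtain ⟨b⟩ := exists_hilbertBasis_of_not_finiteDimensional hinf ℕ
    exact ⟨fun k => e (n, q₀, 2) (b k), b.orthonormal.comp_linearIsometry _,
      fun x k => he.inner_eq_zero (by simp) _ _⟩
  · obtain ⟨u₀, hu₀⟩ := exists_unitary_comp_eq_of_fixes_orthogonal _ hu
    obtain ⟨D, hDW, hD⟩ := hn fun j => if j.1 = q₀ ∧ 1 ≤ j.2 then u₀ else 1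
    have hDs : ∀ j x, D.symm (e (n, j) x) =
        e (n, j) ((if j.1 = q₀ ∧ 1 ≤ j.2 then u₀ else 1 : H ≃ₗᵢ[ℂ] H).symm x) := by
      intro j x
      rw [D.symm_apply_eq, hD, LinearIsometryEquiv.apply_symm_apply]
    have huc : u = D * g * D⁻¹ * g⁻¹ := by
      refine he.ext fun i x => ?_
      change _ = D (g (D.symm (g.symm (e i x))))
      obtain ⟨m, q, k⟩ := i
      by_cases hm : m = n
      · subst hm
        obtain ⟨δ, hδ⟩ := exists_fiberShift_inv_mul m S S' q
        have hg1 : ∀ k x, g (e (m, q, k) x) = e (m, q, k + δ) x := fun k x => by rw [hge, hδ]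
        have hg2 : ∀ k x, g.symm (e (m, q, k) x) = e (m, q, k - δ) x := fun k x => by
          rw [g.symm_apply_eq, hg1, sub_add_cancel]
        rw [hg2, hDs, hg1, hD, sub_add_cancel]
        by_cases hq : q = q₀
        · subst hq
          have hδ1 : δ = 1 := by
            have := hδ 0
            rw [Equiv.Perm.inv_eq_iff_eq, fiberShift_apply_of_mem hq₀',
              fiberShift_apply_of_notMem hq₀] at this
            simpa using this.symm
          subst hδ1
          rcases lt_trichotomy k 1 with hk | rfl | hk
          · rw [hu _ fun y => he.inner_eq_zero (by simp [hk.ne']) _ _]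
            simp [show ¬ 1 ≤ k by omega, show ¬ 1 ≤ k - 1 by omega]
          · rw [hu₀]
            simp
            rfl
          · rw [hu _ fun y => he.inner_eq_zero (by simp [hk.ne]) _ _]
            simp [show 1 ≤ k by omega, show 1 ≤ k - 1 by omega]
        · rw [hu _ fun y => he.inner_eq_zero (by simp [Ne.symm hq]) _ _]
          simp [hq]
      · have h1 : g.symm (e (m, q, k) x) = e (m, q, k) x := by
          rw [g.symm_apply_eq, hge, hgne _ hm]
        rw [h1, he.map_eq_self (A := {i | i.1 = n}) (g := g), D.apply_symm_apply]
        · exact hu _ fun y => he.inner_eq_zero (by simp [Ne.symm hm]) _ _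
        · intro i hi x
          rw [hge, hgne i hi]
        · rintro ⟨l, q, k⟩ rfl x
          obtain ⟨δ, hδ⟩ := exists_fiberShift_inv_mul l S S' q
          exact ⟨(l, q, k - δ), rfl, by rw [g.symm_apply_eq, hge, hδ, sub_add_cancel]⟩
        · rintro ⟨_, j⟩ rfl y
          rw [← D.inner_map_map, D.apply_symm_apply, hD]
          exact he.inner_eq_zero (by simp [Ne.symm hm]) _ _
    rw [huc, show 8 = 2 + 2 + 2 + 2 from rfl, pow_add, pow_add, pow_add]
    exact Set.mul_mem_mul (Set.mul_mem_mul (Set.mul_mem_mul hDW hg)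
      (inv_mem_pow_of_inv_eq hsym hDW)) (inv_mem_pow_of_inv_eq hsym hg)

end Shift

section AlmostDisjoint

variable {H : Type*} [NormedAddCommGroup H] [InnerProductSpace ℂ H]

open Classical in
/-- The branch through `ℕ × Finset ℕ` consisting of the initial segments of `S`. -/
noncomputable def initialSegment (S : Set ℕ) (k : ℕ) : ℕ × Finset ℕ :=
  (k, {q ∈ Finset.range k | q ∈ S})

theorem initialSegment_injective (S : Set ℕ) : Function.Injective (initialSegment S) :=
  fun _ _ h => congrArg Prod.fst h

theorem singleton_ne_initialSegment (S : Set ℕ) (k l : ℕ) : (k, {k}) ≠ initialSegment S l := by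
  intro h
  obtain rfl : k = l := congrArg Prod.fst h
  have : k ∈ (initialSegment S k).2 := by rw [← h]; simp
  simp [initialSegment] at this

theorem le_of_initialSegment_eq {S S' : Set ℕ} {q k l : ℕ} (hq : q ∈ symmDiff S S')
    (h : initialSegment S k = initialSegment S' l) : k ≤ q := by
  obtain rfl : k = l := congrArg Prod.fst h
  by_contra! hlt
  have h2 := congrArg (fun p => q ∈ p.2) h
  simp only [initialSegment, Finset.mem_filter, Finset.mem_range, hlt, true_and, eq_iff_iff] at h2
  rcases hq with ⟨h, h'⟩ | ⟨h, h'⟩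
  · exact h' (h2.1 h)
  · exact h' (h2.2 h)

theorem infinite_range_initialSegment_diff {S S' : Set ℕ} (hne : S ≠ S') :
    (Set.range (initialSegment S) \ Set.range (initialSegment S')).Infinite := by
  obtain ⟨q, hq⟩ := Set.symmDiff_nonempty.2 hne
  refine ((Set.Ioi_infinite q).image (initialSegment_injective S).injOn).mono ?_
  rintro _ ⟨k, hk, rfl⟩
  refine ⟨⟨k, rfl⟩, ?_⟩
  rintro ⟨l, hl⟩
  exact (not_le.2 hk) (le_of_initialSegment_eq hq hl.symm)

theorem finite_range_initialSegment_inter {S S' : Set ℕ} (hne : S ≠ S') :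
    (Set.range (initialSegment S) ∩ Set.range (initialSegment S')).Finite := by
  obtain ⟨q, hq⟩ := Set.symmDiff_nonempty.2 hne
  refine ((Set.finite_Iic q).image (initialSegment S)).subset ?_
  rintro _ ⟨⟨k, rfl⟩, l, hl⟩
  exact ⟨k, le_of_initialSegment_eq hq hl.symm, rfl⟩

theorem infinite_compl_range_initialSegment_union (S S' : Set ℕ) :
    (Set.range (initialSegment S) ∪ Set.range (initialSegment S'))ᶜ.Infinite := by
  refine (Set.infinite_range_of_injective
    (f := fun k : ℕ => (k, ({k} : Finset ℕ))) fun _ _ h => congrArg Prod.fst h).mono ?_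
  rintro _ ⟨k, rfl⟩ (⟨l, hl⟩ | ⟨l, hl⟩)
  · exact singleton_ne_initialSegment S k l hl.symm
  · exact singleton_ne_initialSegment S' k l hl.symm

variable [CompleteSpace H] {W : Set (H ≃ₗᵢ[ℂ] H)} {s : ℕ → H ≃ₗᵢ[ℂ] H}

theorem exists_hilbertBasis_almostDisjoint [TopologicalSpace.SeparableSpace H]
    (hinf : ¬ FiniteDimensional ℂ H) (hsym : W⁻¹ = W) (hs : ∀ g, ∃ n, g ∈ s n • W) :
    ∃ (b : HilbertBasis (ℕ × Finset ℕ) ℂ H) (A B : Set (ℕ × Finset ℕ)),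
      (A ∩ B).Finite ∧ (A \ B).Infinite ∧ (B \ A).Infinite ∧ (A ∪ B)ᶜ.Infinite ∧
      (∀ u : H ≃ₗᵢ[ℂ] H, (∀ i ∈ A, u (b i) = b i) → u ∈ W ^ 10) ∧
      ∀ u : H ≃ₗᵢ[ℂ] H, (∀ i ∈ B, u (b i) = b i) → u ∈ W ^ 10 := by
  obtain ⟨L, hL, hLW⟩ := exists_isometry_forall_mem_pow_eight hinf hsym hs
  obtain ⟨m⟩ := hL.exists_hilbertBasis
  obtain ⟨b⟩ := exists_hilbertBasis_of_not_finiteDimensional hinf (ℕ × Finset ℕ)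
  obtain ⟨p⟩ := exists_hilbertBasis_of_not_finiteDimensional hinf ℕ
  have hmL : ∀ k x, ⟪(m k : H), L x⟫_ℂ = 0 := fun k x =>
    inner_eq_zero_symm.1 (mem_orthogonal_span_range_iff.1 (m k).2 x)
  have hmW : ∀ u : H ≃ₗᵢ[ℂ] H, (∀ k, u (m k : H) = m k) → u ∈ W ^ 8 := by
    intro u hu
    refine hLW u fun v hv => ?_
    have hmem : v ∈ (Submodule.span ℂ (Set.range L))ᗮ := mem_orthogonal_span_range_iff.2 hv
    have hext : u.toLinearIsometry.toContinuousLinearMap.comp (Submodule.subtypeL _) =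
        Submodule.subtypeL (Submodule.span ℂ (Set.range L))ᗮ := by
      refine ContinuousLinearMap.ext_on (Submodule.dense_iff_topologicalClosure_eq_top.2
        m.dense_span) ?_
      rintro _ ⟨k, rfl⟩
      exact hu k
    exact DFunLike.congr_fun hext ⟨v, hmem⟩
  have ht : ∀ S, ∃ t : H ≃ₗᵢ[ℂ] H, ∀ k, t (m k) = b (initialSegment S k) := by
    intro S
    refine exists_unitary_of_inner_eq (fun i j => ?_)
      ⟨fun k => L (p k), p.orthonormal.comp_linearIsometry L, fun k n => hmL k _⟩
      ⟨fun k => b (k, {k}), b.orthonormal.comp _ fun _ _ h => congrArg Prod.fst h,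
        fun l k => b.orthonormal.2 (singleton_ne_initialSegment S k l).symm⟩
    exact (orthonormal_iff_ite.1 m.orthonormal i j).trans (orthonormal_iff_ite.1
      (b.orthonormal.comp _ (initialSegment_injective S)) i j).symm
  choose t ht using ht
  choose n hn using fun S => hs (t S)
  have : Uncountable (Set ℕ) := uncountable_set_nat
  obtain ⟨S, S', hSS', hne⟩ :=
    Function.not_injective_iff.1 (not_injective_uncountable_countable n)
  let b' : HilbertBasis (ℕ × Finset ℕ) ℂ H := .ofRepr ((s (n S)).trans b.repr)
  have hb' : ∀ i, s (n S) (b' i) = b i := fun i => (s (n S)).apply_symm_apply _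
  have key : ∀ S₁, n S = n S₁ → ∀ u : H ≃ₗᵢ[ℂ] H,
      (∀ i ∈ Set.range (initialSegment S₁), u (b' i) = b' i) → u ∈ W ^ 10 := by
    intro S₁ hS₁ u hu
    obtain ⟨w, hw, hwt⟩ := Set.mem_smul_set.1 (hn S₁)
    have hwm : ∀ k, w (m k : H) = b' (initialSegment S₁ k) := by
      intro k
      apply (s (n S)).injective
      rw [hb', ← ht, ← hwt, ← hS₁]
      rfl
    have h8 : w⁻¹ * u * w ∈ W ^ 8 := by
      refine hmW _ fun k => ?_
      change w.symm (u (w (m k : H))) = _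
      rw [w.symm_apply_eq, hwm, hu _ ⟨k, rfl⟩]
    have hu' : u = w * (w⁻¹ * u * w) * w⁻¹ := by group
    rw [hu', show 10 = 1 + 8 + 1 from rfl, pow_add, pow_add, pow_one]
    exact Set.mul_mem_mul (Set.mul_mem_mul hw h8) (hsym ▸ Set.inv_mem_inv.2 hw)
  exact ⟨b', _, _, finite_range_initialSegment_inter hne, infinite_range_initialSegment_diff hne,
    infinite_range_initialSegment_diff hne.symm, infinite_compl_range_initialSegment_union S S',
    key S rfl, key S' hSS'⟩

end AlmostDisjoint

section Factorization

variable {H : Type*} [NormedAddCommGroup H] [InnerProductSpace ℂ H]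

theorem HasInfiniteCodim.map {ι : Type*} {a : ι → H} (ha : HasInfiniteCodim a)
    (u : H ≃ₗᵢ[ℂ] H) : HasInfiniteCodim fun i => u (a i) := by
  obtain ⟨v, hv, hav⟩ := ha
  exact ⟨fun n => u (v n), hv.comp_linearIsometry u.toLinearIsometry, fun i n => by
    rw [u.inner_map_map, hav]⟩

theorem HilbertBasis.hasInfiniteCodim_restrict {I : Type*} (b : HilbertBasis I ℂ H) {C : Set I}
    (hC : Cᶜ.Infinite) : HasInfiniteCodim fun i : C => b i :=
  ⟨fun n => b (hC.natEmbedding Cᶜ n),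
    b.orthonormal.comp _ (Subtype.val_injective.comp (hC.natEmbedding Cᶜ).injective),
    fun i n => b.orthonormal.2 fun h => (hC.natEmbedding Cᶜ n).2 (h ▸ i.2)⟩

theorem HasInfiniteCodim.of_range_subset {ι κ : Type*} {a : ι → H} {c : κ → H}
    (ha : HasInfiniteCodim a) (h : ∀ k, ∃ i, c k = a i) : HasInfiniteCodim c := by
  obtain ⟨v, hv, hav⟩ := ha
  refine ⟨v, hv, fun k n => ?_⟩
  obtain ⟨i, hi⟩ := h k
  rw [hi, hav]

theorem HasInfiniteCodim.exists_norm_eq_one {ι : Type*} {a : ι → H} (ha : HasInfiniteCodim a)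
    (s : Finset H) : ∃ x : H, ‖x‖ = 1 ∧ (∀ i, ⟪a i, x⟫_ℂ = 0) ∧ ∀ y ∈ s, ⟪y, x⟫_ℂ = 0 := by
  obtain ⟨x, hx, hx0⟩ : ∃ x ∈ (Submodule.span ℂ (Set.range a))ᗮ ⊓ (Submodule.span ℂ (s : Set H))ᗮ,
      x ≠ 0 := by
    refine Submodule.exists_mem_ne_zero_of_ne_bot fun hbot => ha.not_finiteDimensional ?_
    let f : (Submodule.span ℂ (Set.range a))ᗮ →ₗ[ℂ] (s → ℂ) :=
      LinearMap.pi fun y => (innerSL ℂ (y : H)).toLinearMap.comp (Submodule.subtype _)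
    refine FiniteDimensional.of_injective f ?_
    rw [injective_iff_map_eq_zero]
    rintro ⟨x, hx⟩ h
    have : x ∈ (Submodule.span ℂ (Set.range a))ᗮ ⊓ (Submodule.span ℂ (s : Set H))ᗮ := by
      refine ⟨hx, ?_⟩
      rw [← Subtype.range_coe (s := (s : Set H)), SetLike.mem_coe, mem_orthogonal_span_range_iff]
      exact fun y => congrFun h y
    rw [hbot, Submodule.mem_bot] at this
    exact Subtype.ext this
  refine ⟨((‖x‖⁻¹ : ℝ) : ℂ) • x, ?_, fun i => ?_, fun y hy => ?_⟩
  · rw [norm_smul, Complex.norm_real, norm_inv, norm_norm, inv_mul_cancel₀ (norm_ne_zero_iff.2 hx0)]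
  · rw [inner_smul_right, mem_orthogonal_span_range_iff.1 hx.1, mul_zero]
  · rw [inner_smul_right, (Submodule.mem_orthogonal _ _).1 hx.2 y (Submodule.subset_span hy),
      mul_zero]

theorem HasInfiniteCodim.exists_orthonormal_pair {ι κ : Type*} {a : ι → H} {c : κ → H}
    (ha : HasInfiniteCodim a) (hc : HasInfiniteCodim c) :
    ∃ x y : ℕ → H, Orthonormal ℂ x ∧ Orthonormal ℂ y ∧ (∀ m n, ⟪x m, y n⟫_ℂ = 0) ∧
      (∀ i n, ⟪a i, x n⟫_ℂ = 0) ∧ ∀ i n, ⟪c i, y n⟫_ℂ = 0 := by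
  classical
  obtain ⟨f, hf, hff⟩ := exists_seq_of_forall_finset_exists
    (fun p : H × H => ‖p.1‖ = 1 ∧ ‖p.2‖ = 1 ∧ ⟪p.1, p.2⟫_ℂ = 0 ∧ (∀ i, ⟪a i, p.1⟫_ℂ = 0) ∧
      ∀ i, ⟪c i, p.2⟫_ℂ = 0)
    (fun p p' => ⟪p.1, p'.1⟫_ℂ = 0 ∧ ⟪p.2, p'.2⟫_ℂ = 0 ∧ ⟪p.1, p'.2⟫_ℂ = 0 ∧ ⟪p.2, p'.1⟫_ℂ = 0)
    (by
      intro s _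
      obtain ⟨x, hx1, hxa, hxs⟩ := ha.exists_norm_eq_one (s.image Prod.fst ∪ s.image Prod.snd)
      obtain ⟨y, hy1, hyc, hys⟩ :=
        hc.exists_norm_eq_one (insert x (s.image Prod.fst ∪ s.image Prod.snd))
      refine ⟨(x, y), ⟨hx1, hy1, hys x (Finset.mem_insert_self _ _), hxa, hyc⟩, fun p hp => ?_⟩
      have h1 : p.1 ∈ s.image Prod.fst ∪ s.image Prod.snd :=
        Finset.mem_union_left _ (Finset.mem_image_of_mem _ hp)
      have h2 : p.2 ∈ s.image Prod.fst ∪ s.image Prod.snd :=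
        Finset.mem_union_right _ (Finset.mem_image_of_mem _ hp)
      exact ⟨hxs _ h1, hys _ (Finset.mem_insert_of_mem h2), hys _ (Finset.mem_insert_of_mem h1),
        hxs _ h2⟩)
  refine ⟨fun n => (f n).1, fun n => (f n).2, ⟨fun n => (hf n).1, fun m n hmn => ?_⟩,
    ⟨fun n => (hf n).2.1, fun m n hmn => ?_⟩, fun m n => ?_, fun i n => (hf n).2.2.2.1 i,
    fun i n => (hf n).2.2.2.2 i⟩
  · rcases hmn.lt_or_gt with h | h
    · exact (hff m n h).1
    · exact inner_eq_zero_symm.1 (hff n m h).1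
  · rcases hmn.lt_or_gt with h | h
    · exact (hff m n h).2.1
    · exact inner_eq_zero_symm.1 (hff n m h).2.1
  · rcases lt_trichotomy m n with h | rfl | h
    · exact (hff m n h).2.2.1
    · exact (hf m).2.2.1
    · exact inner_eq_zero_symm.1 (hff n m h).2.2.2

theorem exists_unitary_of_orthonormal_sumElim [CompleteSpace H]
    [TopologicalSpace.SeparableSpace H] {κ ι : Type*} {x y : κ → H} {a : ι → H}
    (hx : Orthonormal ℂ x) (hy : Orthonormal ℂ y) (hax : ∀ i k, ⟪a i, x k⟫_ℂ = 0)
    (hay : ∀ i k, ⟪a i, y k⟫_ℂ = 0) (hcx : HasInfiniteCodim (Sum.elim x a))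
    (hcy : HasInfiniteCodim (Sum.elim y a)) :
    ∃ u : H ≃ₗᵢ[ℂ] H, (∀ k, u (x k) = y k) ∧ ∀ i, u (a i) = a i := by
  classical
  obtain ⟨u, hu⟩ := exists_unitary_of_inner_eq (a := Sum.elim x a) (b := Sum.elim y a) (by
    rintro (k | i) (l | j)
    · exact (orthonormal_iff_ite.1 hx k l).trans (orthonormal_iff_ite.1 hy k l).symm
    · exact (inner_eq_zero_symm.1 (hax j k)).trans (inner_eq_zero_symm.1 (hay j k)).symm
    · exact (hax i l).trans (hay i l).symm
    · rfl) hcx hcy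
  exact ⟨u, fun k => hu (Sum.inl k), fun i => hu (Sum.inr i)⟩

theorem HilbertBasis.exists_factorization [CompleteSpace H] [TopologicalSpace.SeparableSpace H]
    {I : Type*} [Countable I] (b : HilbertBasis I ℂ H) {A B : Set I} (hAB : (A \ B).Infinite)
    (hBA : (B \ A).Infinite) (hc : (A ∪ B)ᶜ.Infinite) {u : H ≃ₗᵢ[ℂ] H}
    (hu : ∀ i ∈ A ∩ B, u (b i) = b i) :
    ∃ a₀ a₁ a₂ a₃ : H ≃ₗᵢ[ℂ] H, (∀ i ∈ B, a₀ (b i) = b i) ∧ (∀ i ∈ A, a₁ (b i) = b i) ∧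
      (∀ i ∈ B, a₂ (b i) = b i) ∧ (∀ i ∈ A, a₃ (b i) = b i) ∧
      u = a₀⁻¹ * a₁⁻¹ * a₂⁻¹ * a₃ := by
  have := hAB.to_subtype
  have := hBA.to_subtype
  obtain ⟨ξ⟩ : Nonempty (ℕ ≃ ↥(A \ B)) := nonempty_equiv_of_countable
  obtain ⟨η⟩ : Nonempty (ℕ ≃ ↥(B \ A)) := nonempty_equiv_of_countable
  have hcA : Aᶜ.Infinite := hc.mono (Set.compl_subset_compl.2 Set.subset_union_left)
  have hcB : Bᶜ.Infinite := hc.mono (Set.compl_subset_compl.2 Set.subset_union_right)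
  have hcodim : HasInfiniteCodim fun i : ↥(A ∪ B) => b i := b.hasInfiniteCodim_restrict hc
  have hb : ∀ {i j}, i ≠ j → ⟪b i, b j⟫_ℂ = 0 := fun h => b.orthonormal.2 h
  have heven : Function.Injective fun n : ℕ => 2 * n := fun _ _ h => by simpa using h
  have hodd : Function.Injective fun n : ℕ => 2 * n + 1 := fun _ _ h => by simpa using h
  obtain ⟨x, q, hx, hq, hxq, hxB, hqA⟩ := (b.hasInfiniteCodim_restrict hcB).exists_orthonormal_pair
    ((b.hasInfiniteCodim_restrict hcA).map u)
  obtain ⟨a₀, ha₀x, ha₀⟩ := exists_unitary_of_orthonormal_sumElim (a := fun i : B => b i)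
    (hx.comp _ heven) (b.orthonormal.comp _ (Subtype.val_injective.comp ξ.injective))
    (fun i k => hxB i _) (fun i k => hb fun h : (i : I) = ξ k => (ξ k).2.2 (h ▸ i.2))
    ⟨fun n => x (2 * n + 1), hx.comp _ hodd, by
      rintro (k | i) n
      · exact hx.2 (show 2 * k ≠ 2 * n + 1 by omega)
      · exact hxB _ _⟩
    (hcodim.of_range_subset (by
      rintro (k | i)
      · exact ⟨⟨ξ k, Or.inl (ξ k).2.1⟩, rfl⟩
      · exact ⟨⟨i, Or.inr i.2⟩, rfl⟩))
  have hqA' : ∀ i ∈ A, ∀ n, ⟪b i, a₀ (q n)⟫_ℂ = 0 := by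
    intro i hi n
    by_cases hiB : i ∈ B
    · rw [← ha₀ ⟨i, hiB⟩, a₀.inner_map_map, ← hu i ⟨hi, hiB⟩]
      exact hqA ⟨i, hi⟩ n
    · obtain ⟨k, hk⟩ := ξ.surjective ⟨i, hi, hiB⟩
      have := ha₀x k
      simp only [Function.comp_apply, hk] at this
      rw [← this, a₀.inner_map_map, hxq]
  have hq' : Orthonormal ℂ fun n => a₀ (q n) := hq.comp_linearIsometry a₀.toLinearIsometry
  obtain ⟨a₁, ha₁q, ha₁⟩ := exists_unitary_of_orthonormal_sumElim (a := fun i : A => b i)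
    (hq'.comp _ heven) (b.orthonormal.comp _ (Subtype.val_injective.comp η.injective))
    (fun i k => hqA' i i.2 _) (fun i k => hb fun h : (i : I) = η k => (η k).2.2 (h ▸ i.2))
    ⟨fun n => a₀ (q (2 * n + 1)), hq'.comp _ hodd, by
      rintro (k | i) n
      · exact hq'.2 (show 2 * k ≠ 2 * n + 1 by omega)
      · exact hqA' i i.2 _⟩
    (hcodim.of_range_subset (by
      rintro (k | i)
      · exact ⟨⟨η k, Or.inr (η k).2.1⟩, rfl⟩
      · exact ⟨⟨i, Or.inl i.2⟩, rfl⟩))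
  have hA : ∀ i ∈ A ∩ B, a₁ (a₀ (u (b i))) = b i := fun i hi => by
    rw [hu i hi, ha₀ ⟨i, hi.2⟩, ha₁ ⟨i, hi.1⟩]
  have hBq : ∀ j ∈ B \ A, ∃ n, b j = a₁ (a₀ (q (2 * n))) := by
    intro j hj
    obtain ⟨k, hk⟩ := η.surjective ⟨j, hj⟩
    have := ha₁q k
    simp only [Function.comp_apply, hk] at this
    exact ⟨k, this.symm⟩
  obtain ⟨a₂, ha₂u, ha₂⟩ := exists_unitary_of_orthonormal_sumElim (a := fun i : B => b i)
    (x := fun i : ↥(A \ B) => a₁ (a₀ (u (b i)))) (y := fun i : ↥(A \ B) => b i)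
    ((b.orthonormal.comp _ Subtype.val_injective).comp_linearIsometry
      (a₁ * a₀ * u).toLinearIsometry)
    (b.orthonormal.comp _ Subtype.val_injective)
    (by
      rintro ⟨j, hjB⟩ ⟨i, hiA, hiB⟩
      by_cases hjA : j ∈ A
      · change ⟪b j, _⟫_ℂ = 0
        rw [← hA j ⟨hjA, hjB⟩]
        simp only [LinearIsometryEquiv.inner_map_map]
        exact hb fun h => hiB (h ▸ hjB)
      · obtain ⟨n, hn⟩ := hBq j ⟨hjB, hjA⟩
        simp only [hn, LinearIsometryEquiv.inner_map_map]
        exact inner_eq_zero_symm.1 (hqA ⟨i, hiA⟩ _))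
    (fun i k => hb fun h => k.2.2 (h ▸ i.2))
    ⟨fun n => a₁ (a₀ (q (2 * n + 1))), (hq'.comp _ hodd).comp_linearIsometry a₁.toLinearIsometry,
      by
      rintro (⟨i, hi⟩ | ⟨j, hjB⟩) n
      · simp only [Sum.elim_inl, LinearIsometryEquiv.inner_map_map]
        exact hqA ⟨i, hi.1⟩ _
      · rw [Sum.elim_inr]
        by_cases hjA : j ∈ A
        · rw [← ha₁ ⟨j, hjA⟩, a₁.inner_map_map]
          exact hqA' j hjA _
        · obtain ⟨m, hm⟩ := hBq j ⟨hjB, hjA⟩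
          simp only [hm, LinearIsometryEquiv.inner_map_map]
          exact hq.2 (by omega)⟩
    (hcodim.of_range_subset (by
      rintro (i | i)
      · exact ⟨⟨i, Or.inl i.2.1⟩, rfl⟩
      · exact ⟨⟨i, Or.inr i.2⟩, rfl⟩))
  refine ⟨a₀, a₁, a₂, a₂ * a₁ * a₀ * u, fun i hi => ha₀ ⟨i, hi⟩, fun i hi => ha₁ ⟨i, hi⟩,
    fun i hi => ha₂ ⟨i, hi⟩, fun i hi => ?_, by group⟩
  change a₂ (a₁ (a₀ (u (b i)))) = b i
  by_cases hiB : i ∈ B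
  · rw [hA i ⟨hi, hiB⟩, ha₂ ⟨i, hiB⟩]
  · exact ha₂u ⟨i, hi, hiB⟩

theorem exists_finiteDimensional_forall_mem_pow_forty [CompleteSpace H]
    [TopologicalSpace.SeparableSpace H] {W : Set (H ≃ₗᵢ[ℂ] H)} {s : ℕ → H ≃ₗᵢ[ℂ] H}
    (hinf : ¬ FiniteDimensional ℂ H) (hsym : W⁻¹ = W) (hs : ∀ g, ∃ n, g ∈ s n • W) :
    ∃ F : Submodule ℂ H, FiniteDimensional ℂ F ∧
      ∀ u : H ≃ₗᵢ[ℂ] H, (∀ x ∈ F, u x = x) → u ∈ W ^ 40 := by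
  obtain ⟨b, A, B, hfin, hAB, hBA, hc, hA, hB⟩ := exists_hilbertBasis_almostDisjoint hinf hsym hs
  refine ⟨Submodule.span ℂ (b '' (A ∩ B)), FiniteDimensional.span_of_finite ℂ (hfin.image b),
    fun u hu => ?_⟩
  obtain ⟨a₀, a₁, a₂, a₃, h₀, h₁, h₂, h₃, rfl⟩ := b.exists_factorization hAB hBA hc
    fun i hi => hu _ (Submodule.subset_span ⟨i, hi, rfl⟩)
  rw [show 40 = 10 + 10 + 10 + 10 from rfl, pow_add, pow_add, pow_add]
  exact Set.mul_mem_mul (Set.mul_mem_mul (Set.mul_mem_mul (inv_mem_pow_of_inv_eq hsym (hB _ h₀))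
    (inv_mem_pow_of_inv_eq hsym (hA _ h₁))) (inv_mem_pow_of_inv_eq hsym (hB _ h₂))) (hA _ h₃)

end Factorization

section OperatorEquations

theorem Complex.exists_sq_eq_of_norm_eq_one {lam : ℂ} (hlam : ‖lam‖ = 1) :
    ∃ x : ℂ, ‖x‖ = 1 ∧ x * x = lam ∧ 2 * |x.im| = ‖lam - 1‖ := by
  obtain ⟨x, hx⟩ := IsAlgClosed.exists_pow_nat_eq lam (n := 2) (by norm_num)
  have hx1 : ‖x‖ = 1 := by
    have h : ‖x‖ ^ 2 = 1 := by rw [← norm_pow, hx, hlam]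
    exact (pow_eq_one_iff_of_nonneg (norm_nonneg _) two_ne_zero).1 h
  refine ⟨x, hx1, by rw [← hx, pow_two], ?_⟩
  have hxc : x * (starRingEnd ℂ) x = 1 := by
    rw [Complex.mul_conj, Complex.normSq_eq_norm_sq, hx1]; norm_num
  have h : lam - 1 = x * (x - (starRingEnd ℂ) x) := by rw [mul_sub, hxc, ← hx, pow_two]
  rw [h, norm_mul, hx1, one_mul, Complex.sub_conj]
  simp

/-- In the plane, a rotation by a small unimodular `lam` is a product of three unitaries, each
fixing one of two given lines. The numbers `C`, `S` are the cosine and sine of the angle between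
the two lines. -/
theorem Complex.exists_unimodular_pair {C S : ℝ} (hS : 0 < S) (hCS : C ^ 2 + S ^ 2 = 1) {lam : ℂ}
    (hlam : ‖lam‖ = 1) (hlam1 : ‖lam - 1‖ ≤ S ^ 2) :
    ∃ z w : ℂ, star z * z = 1 ∧ star w * w = 1 ∧
      (C ^ 2 + S ^ 2 * z) * (C ^ 2 + S ^ 2 * z) +
        (S * C) ^ 2 * ((1 - z) * w * (1 - z)) = lam ∧
      (1 - z) * (C ^ 2 + S ^ 2 * z) + (S ^ 2 + C ^ 2 * z) * w * (1 - z) = 0 := by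
  obtain ⟨x, hx, hxlam, hxim⟩ := Complex.exists_sq_eq_of_norm_eq_one hlam
  have hxc : star x * x = 1 := by
    rw [Complex.star_def, ← Complex.normSq_eq_conj_mul_self, Complex.normSq_eq_norm_sq, hx]
    norm_num
  have hS2 : 0 < S ^ 2 := by positivity
  obtain ⟨r, hr⟩ : ∃ r : ℝ, S ^ 2 * r = C ^ 2 * x.im :=
    ⟨C ^ 2 * x.im / S ^ 2, by field_simp⟩
  have hr1 : r ^ 2 ≤ 1 := by
    have him : |x.im| ≤ S ^ 2 := by linarith [abs_nonneg x.im]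
    have : |r| ≤ 1 := by
      have h : S ^ 2 * |r| = C ^ 2 * |x.im| := by
        rw [← abs_of_pos hS2, ← abs_mul, hr, abs_mul, abs_of_nonneg (sq_nonneg C)]
      have : C ^ 2 * |x.im| ≤ 1 * S ^ 2 :=
        mul_le_mul (by linarith) him (abs_nonneg _) zero_le_one
      nlinarith
    exact (sq_le_one_iff_abs_le_one r).2 this
  let y : ℂ := ⟨√(1 - r ^ 2), r⟩
  have hyc : star y * y = 1 := by
    rw [Complex.star_def, ← Complex.normSq_eq_conj_mul_self, Complex.normSq_mk,
      Real.mul_self_sqrt (by linarith)]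
    norm_num
    ring
  have hxy : (S : ℂ) ^ 2 * (y - star y) = C ^ 2 * (x - star x) := by
    rw [Complex.star_def, Complex.sub_conj, Complex.sub_conj]
    have : (S : ℂ) ^ 2 * r = C ^ 2 * x.im := by exact_mod_cast hr
    change (S : ℂ) ^ 2 * ((2 * r : ℝ) * Complex.I) = _
    push_cast
    linear_combination 2 * Complex.I * this
  have hCS' : (C : ℂ) ^ 2 + S ^ 2 = 1 := by exact_mod_cast hCS
  refine ⟨x * y, -(star y * x), ?_, ?_, ?_, ?_⟩
  · rw [star_mul]
    linear_combination star y * y * hxc + hyc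
  · rw [star_neg, star_mul, star_star]
    linear_combination star y * y * hxc + hyc
  · have hK : (C : ℂ) ^ 2 + S ^ 2 * (x * y) - S ^ 2 * (x * star y) - C ^ 2 * (x * x) = 0 := by
      linear_combination x * hxy - (C : ℂ) ^ 2 * hxc
    linear_combination ((C : ℂ) ^ 2 + S ^ 2 * (x * y)) * hK + hxlam +
      x ^ 2 * ((C : ℂ) ^ 2 + S ^ 2 + 1) * hCS' + ((S : ℂ) ^ 4 * x ^ 2 +
      2 * S ^ 2 * C ^ 2 * x ^ 2 - S ^ 2 * C ^ 2 * x ^ 3 * y) * hyc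
  · linear_combination (1 - x * y) * (x * hxy - (C : ℂ) ^ 2 * hxc - (C : ℂ) ^ 2 * x ^ 2 * hyc)

variable {A : Type*} [CStarAlgebra A]

theorem norm_le_of_mem_spectrum_sub_one {v : A} {lam : ℂ} (hlam : lam ∈ spectrum ℂ v) :
    ‖lam - 1‖ ≤ ‖v - 1‖ := by
  have : Nontrivial A := by
    by_contra h
    rw [not_nontrivial_iff_subsingleton] at h
    simp [spectrum.of_subsingleton] at hlam
  refine spectrum.norm_le_norm_of_mem (𝕜 := ℂ) ?_
  have := spectrum.sub_singleton_eq v (1 : ℂ)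
  rw [map_one] at this
  rw [← this]
  exact Set.sub_mem_sub hlam rfl

theorem exists_unitary_pair {C S : ℝ} (hS : 0 < S) (hCS : C ^ 2 + S ^ 2 = 1) {v : A}
    (hv : v ∈ unitary A) (hfin : (spectrum ℂ v).Finite) (hv1 : ‖v - 1‖ ≤ S ^ 2) :
    ∃ z w : A, star z * z = 1 ∧ star w * w = 1 ∧
      ((C : ℂ) ^ 2 • 1 + (S : ℂ) ^ 2 • z) * ((C : ℂ) ^ 2 • 1 + (S : ℂ) ^ 2 • z) +
        ((S : ℂ) * C) ^ 2 • ((1 - z) * w * (1 - z)) = v ∧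
      (1 - z) * ((C : ℂ) ^ 2 • 1 + (S : ℂ) ^ 2 • z) +
        ((S : ℂ) ^ 2 • 1 + (C : ℂ) ^ 2 • z) * w * (1 - z) = 0 := by
  have h : ∀ lam ∈ spectrum ℂ v, ∃ z w : ℂ, star z * z = 1 ∧ star w * w = 1 ∧
      (C ^ 2 + S ^ 2 * z) * (C ^ 2 + S ^ 2 * z) +
        (S * C) ^ 2 * ((1 - z) * w * (1 - z)) = lam ∧
      (1 - z) * (C ^ 2 + S ^ 2 * z) + (S ^ 2 + C ^ 2 * z) * w * (1 - z) = 0 := by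
    intro lam hlam
    refine Complex.exists_unimodular_pair hS hCS ?_
      ((norm_le_of_mem_spectrum_sub_one hlam).trans hv1)
    simpa using Unitary.spectrum_subset_circle (𝕜 := ℂ) ⟨v, hv⟩ hlam
  choose! f g hf hg h1 h2 using h
  have hn : IsStarNormal v := ⟨by rw [Commute, SemiconjBy, hv.1, hv.2]⟩
  have hc : ∀ f : ℂ → ℂ, ContinuousOn f (spectrum ℂ v) := hfin.continuousOn
  have hmul : ∀ f g : ℂ → ℂ, cfc f v * cfc g v = cfc (fun t => f t * g t) v :=
    fun f g => (cfc_mul f g v (hc f) (hc g)).symm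
  have hadd : ∀ f g : ℂ → ℂ, cfc f v + cfc g v = cfc (fun t => f t + g t) v :=
    fun f g => (cfc_add v f g (hc f) (hc g)).symm
  have hsub : ∀ f g : ℂ → ℂ, cfc f v - cfc g v = cfc (fun t => f t - g t) v :=
    fun f g => (cfc_sub f g v (hc f) (hc g)).symm
  have hsmul : ∀ (r : ℂ) (f : ℂ → ℂ), r • cfc f v = cfc (fun t => r * f t) v :=
    fun r f => (cfc_const_mul r f v (hc f)).symm
  have hone : (1 : A) = cfc (fun _ => (1 : ℂ)) v := (cfc_const_one ℂ v).symm
  have hid : v = cfc (fun t : ℂ => t) v := (cfc_id' ℂ v).symm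
  refine ⟨cfc f v, cfc g v, ?_, ?_, ?_, ?_⟩
  · rw [← cfc_star, hmul, hone]
    exact cfc_congr hf
  · rw [← cfc_star, hmul, hone]
    exact cfc_congr hg
  · rw [hone]
    simp only [hmul, hadd, hsub, hsmul]
    refine Eq.trans (cfc_congr ?_) hid.symm
    intro t ht
    simpa using h1 t ht
  · rw [hone]
    simp only [hmul, hadd, hsub, hsmul]
    rw [← cfc_const_zero ℂ v]
    refine cfc_congr fun t ht => ?_
    simpa using h2 t ht

theorem exists_polar_decomposition {S : ℝ} (hS : 0 < S) (hS1 : S ≤ 1) {c : A} (hc : ‖c‖ ≤ 1)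
    (hc1 : ‖c - 1‖ < S ^ 2 / 3) :
    ∃ v d e : A, v ∈ unitary A ∧ ‖v - 1‖ ≤ S ^ 2 ∧ star d * d + star e * e = 1 ∧
      c = v * (1 - (S : ℂ) ^ 2 • (1 - d)) := by
  let := CStarAlgebra.spectralOrder A
  let := CStarAlgebra.spectralOrderedRing A
  set p := CFC.abs c with hp
  have hS2 : 0 < S ^ 2 := by positivity
  have hS21 : S ^ 2 ≤ 1 := pow_le_one₀ hS.le hS1
  have hp0 : 0 ≤ p := CFC.abs_nonneg c
  have hpp : p * p = star c * c := CFC.abs_mul_abs c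
  have hps : star p = p := hp0.isSelfAdjoint
  have hp1 : p ≤ 1 := by
    rw [← CStarAlgebra.norm_le_one_iff_of_nonneg p hp0, hp, CFC.norm_abs]
    exact hc
  have hcu : IsUnit c := by
    have := isUnit_one_sub_of_norm_lt_one (x := 1 - c) (by rw [norm_sub_rev]; linarith)
    rwa [sub_sub_cancel] at this
  have hpu : IsUnit p := by
    rw [← isUnit_mul_self_iff, hpp]
    exact hcu.star.mul hcu
  have h1p : ‖1 - p‖ ≤ 2 * ‖c - 1‖ := by
    have hle : 1 - p ≤ 1 - p * p := by
      have := CStarAlgebra.pow_antitone hp0 hp1 one_le_two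
      simp only [pow_one, pow_two] at this
      exact sub_le_sub_left this 1
    refine (CStarAlgebra.norm_le_norm_of_nonneg_of_le (sub_nonneg.2 hp1) hle).trans ?_
    have h : 1 - p * p = star c * (1 - c) + star (1 - c) := by
      rw [hpp, star_sub, star_one]; noncomm_ring
    rw [h]
    refine (norm_add_le _ _).trans ?_
    rw [norm_star, norm_sub_rev]
    have := norm_mul_le (star c) (1 - c)
    rw [norm_star, norm_sub_rev] at this
    nlinarith [norm_nonneg (c - 1)]
  obtain ⟨P, hP⟩ := hpu
  obtain ⟨K, hK⟩ := hcu
  set v : A := c * ↑P⁻¹ with hv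
  have hPs : star (↑P⁻¹ : A) = ↑P⁻¹ := by
    rw [← Units.coe_star, star_inv]
    congr 2
    ext
    rw [Units.coe_star, hP, hps]
  have hvv : star v * v = 1 := by
    rw [hv, star_mul, hPs, mul_assoc, ← mul_assoc (star c), ← hpp, ← hP]
    simp
  have hvu : v ∈ unitary A := by
    refine ⟨hvv, ?_⟩
    have hv' : v = ↑(K * P⁻¹) := by rw [hv, ← hK]; simp
    have hvi : v * ↑(K * P⁻¹)⁻¹ = 1 := by rw [hv']; exact Units.mul_inv _
    rw [left_inv_eq_right_inv hvv hvi]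
    exact hvi
  have hcv : c = v * p := by rw [hv, ← hP]; simp
  have hSi : (S : ℂ) ^ 2 * ((S ^ 2)⁻¹ : ℝ) = 1 := by
    push_cast
    exact mul_inv_cancel₀ (by exact_mod_cast hS2.ne')
  set d : A := 1 - ((S ^ 2)⁻¹ : ℝ) • (1 - p) with hd
  have hq0 : 0 ≤ ((S ^ 2)⁻¹ : ℝ) • (1 - p) := smul_nonneg (by positivity) (sub_nonneg.2 hp1)
  have hq1 : ((S ^ 2)⁻¹ : ℝ) • (1 - p) ≤ 1 := by
    rw [← CStarAlgebra.norm_le_one_iff_of_nonneg _ hq0, norm_smul, norm_inv,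
      Real.norm_of_nonneg hS2.le,
      inv_mul_le_iff₀ hS2]
    linarith
  have hd0 : 0 ≤ d := sub_nonneg.2 hq1
  have hd1 : d ≤ 1 := sub_le_self 1 hq0
  have hds : star d = d := hd0.isSelfAdjoint
  have hdd : 0 ≤ 1 - d * d := by
    have := CStarAlgebra.pow_antitone hd0 hd1 zero_le_two
    simp only [pow_zero, pow_two] at this
    exact sub_nonneg.2 this
  refine ⟨v, d, CFC.sqrt (1 - d * d), hvu, ?_, ?_, ?_⟩
  · have h : v - 1 = v * (1 - p) + (c - 1) := by rw [mul_sub, ← hcv]; noncomm_ring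
    rw [h]
    refine (norm_add_le _ _).trans ?_
    have := CStarRing.norm_coe_unitary_mul ⟨v, hvu⟩ (1 - p)
    simp only at this
    rw [this]
    linarith
  · rw [hds, (CFC.sqrt_nonneg _).isSelfAdjoint, CFC.sqrt_mul_sqrt_self _ hdd]
    abel
  · rw [hd, sub_sub_cancel, ← Complex.coe_smul, smul_smul, hSi, one_smul, sub_sub_cancel]
    exact hcv

end OperatorEquations

section FiniteDimensional

variable {H : Type*} [NormedAddCommGroup H] [InnerProductSpace ℂ H] [CompleteSpace H]
  [TopologicalSpace.SeparableSpace H]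

theorem exists_isometry_orthogonal (hinf : ¬ FiniteDimensional ℂ H) (G : Submodule ℂ H)
    [FiniteDimensional ℂ G] : ∃ j : H →ₗᵢ[ℂ] H, ∀ y ∈ G, ∀ x, ⟪y, j x⟫_ℂ = 0 := by
  obtain ⟨p⟩ := exists_hilbertBasis_of_not_finiteDimensional hinf ℕ
  obtain ⟨q⟩ := (hasInfiniteCodim_of_finiteDimensional hinf G (a := fun x : G => (x : H))
    fun x => x.2).exists_hilbertBasis
  refine ⟨(Submodule.subtypeₗᵢ _).comp (p.repr.trans q.repr.symm).toLinearIsometry,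
    fun y hy x => ?_⟩
  exact mem_orthogonal_span_range_iff.1 (q.repr.symm (p.repr x)).2 ⟨y, hy⟩

theorem exists_unitary_fixing_of_isometries {E : Type*} [NormedAddCommGroup E]
    [InnerProductSpace ℂ E] [FiniteDimensional ℂ E] [CompleteSpace E]
    (hinf : ¬ FiniteDimensional ℂ H) {P Q R : E →ₗᵢ[ℂ] H} (hPQ : ∀ x y, ⟪P x, Q y⟫_ℂ = 0)
    (hPR : ∀ x y, ⟪P x, R y⟫_ℂ = 0) (hQR : ∀ x y, ⟪Q x, R y⟫_ℂ = 0) {d e : E →L[ℂ] E}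
    (hde : star d * d + star e * e = 1) :
    ∃ h : H ≃ₗᵢ[ℂ] H, (∀ x, h (P x) = P x) ∧ ∀ x, h (Q x) = Q (d x) + R (e x) := by
  have hin : ∀ x y, ⟪d x, d y⟫_ℂ + ⟪e x, e y⟫_ℂ = ⟪x, y⟫_ℂ := by
    intro x y
    rw [← ContinuousLinearMap.adjoint_inner_right d, ← ContinuousLinearMap.adjoint_inner_right e,
      ← inner_add_right]
    exact congrArg (fun z => ⟪x, z⟫_ℂ) (DFunLike.congr_fun hde y)
  let G := LinearMap.range P.toLinearMap ⊔ LinearMap.range Q.toLinearMap ⊔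
    LinearMap.range R.toLinearMap
  have hP : ∀ x, P x ∈ G := fun x =>
    Submodule.mem_sup_left (Submodule.mem_sup_left ⟨x, rfl⟩)
  have hQ : ∀ x, Q x ∈ G := fun x =>
    Submodule.mem_sup_left (Submodule.mem_sup_right ⟨x, rfl⟩)
  have hR : ∀ x, R x ∈ G := fun x => Submodule.mem_sup_right ⟨x, rfl⟩
  obtain ⟨h, hh⟩ := exists_unitary_of_inner_eq (a := Sum.elim P Q)
    (b := Sum.elim P fun x => Q (d x) + R (e x)) (by
      rintro (x | x) (y | y)
      · rfl
      · simp [hPQ, hPR]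
      · simp [inner_eq_zero_symm.1 (hPQ _ _), inner_eq_zero_symm.1 (hPR _ _)]
      · simp [hQR, inner_eq_zero_symm.1 (hQR _ _), hin])
    (hasInfiniteCodim_of_finiteDimensional hinf G (by
      rintro (x | x)
      · exact hP x
      · exact hQ x))
    (hasInfiniteCodim_of_finiteDimensional hinf G (by
      rintro (x | x)
      · exact hP x
      · exact G.add_mem (hQ _) (hR _)))
  exact ⟨h, fun x => hh (Sum.inl x), fun x => hh (Sum.inr x)⟩

variable {W : Set (H ≃ₗᵢ[ℂ] H)} {s : ℕ → H ≃ₗᵢ[ℂ] H}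

theorem exists_isoclinic_mem_sq (hinf : ¬ FiniteDimensional ℂ H) (hsym : W⁻¹ = W)
    (hs : ∀ g, ∃ n, g ∈ s n • W) (F : Submodule ℂ H) [FiniteDimensional ℂ F] :
    ∃ t ∈ W ^ 2, ∃ C S : ℝ, 0 < S ∧ C ^ 2 + S ^ 2 = 1 ∧
      ∀ x ∈ F, ∀ y ∈ F, ⟪x, t y⟫_ℂ = C * ⟪x, y⟫_ℂ := by
  obtain ⟨j, hj⟩ := exists_isometry_orthogonal hinf F
  have hj' : ∀ y ∈ F, ∀ x, ⟪j x, y⟫_ℂ = 0 := fun y hy x => inner_eq_zero_symm.1 (hj y hy x)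
  have hG : ∀ r : ℝ, ∀ x : F, (Real.cos r : ℂ) • (x : H) + (Real.sin r : ℂ) • j x ∈
      F ⊔ F.map j.toLinearMap := fun r x => Submodule.add_mem_sup (F.smul_mem _ x.2)
        (Submodule.smul_mem _ _ ⟨x, x.2, rfl⟩)
  have hinner : ∀ r r' : ℝ, ∀ x y : F, ⟪(Real.cos r : ℂ) • (x : H) + (Real.sin r : ℂ) • j x,
      (Real.cos r' : ℂ) • (y : H) + (Real.sin r' : ℂ) • j y⟫_ℂ =
        (Real.cos (r - r') : ℂ) * ⟪(x : H), y⟫_ℂ := by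
    intro r r' x y
    rw [inner_add_left, inner_add_right, inner_add_right]
    simp only [inner_smul_left, inner_smul_right, hj _ x.2, hj' _ y.2, j.inner_map_map,
      Complex.conj_ofReal, Real.cos_sub]
    push_cast
    ring
  have ht : ∀ r : Set.Ioo (0 : ℝ) 1, ∃ t : H ≃ₗᵢ[ℂ] H, ∀ x : F,
      t x = (Real.cos r : ℂ) • (x : H) + (Real.sin r : ℂ) • j x := by
    intro r
    have : FiniteDimensional ℂ (F ⊔ F.map j.toLinearMap : Submodule ℂ H) :=
      Submodule.finiteDimensional_sup _ _
    refine exists_unitary_of_inner_eq (fun x y => ?_)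
      (hasInfiniteCodim_of_finiteDimensional hinf F fun x => x.2)
      (hasInfiniteCodim_of_finiteDimensional hinf _ (hG r))
    rw [hinner, sub_self, Real.cos_zero, Complex.ofReal_one, one_mul]
  choose t ht using ht
  have : Uncountable (Set.Ioo (0 : ℝ) 1) := by
    rw [← Cardinal.aleph0_lt_mk_iff, Cardinal.mk_Ioo_real zero_lt_one]
    exact Cardinal.aleph0_lt_continuum
  obtain ⟨r, r', hne, hr⟩ := exists_inv_mul_mem_sq hsym hs t
  refine ⟨_, hr, Real.cos (r - r'), |Real.sin (r - r')|, ?_, ?_, fun x hx y hy => ?_⟩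
  · rw [abs_pos]
    have h0 : (r - r' : ℝ) ≠ 0 := sub_ne_zero.2 fun h => hne (Subtype.ext h)
    have h1 := r.2.1
    have h2 := r.2.2
    have h3 := r'.2.1
    have h4 := r'.2.2
    rw [Ne, Real.sin_eq_zero_iff_of_lt_of_lt (by linarith [Real.pi_gt_three])
      (by linarith [Real.pi_gt_three])]
    exact h0
  · rw [sq_abs, Real.cos_sq_add_sin_sq]
  · change ⟪x, (t r).symm (t r' y)⟫_ℂ = _
    rw [← (t r).inner_map_map, (t r).apply_symm_apply, ht r ⟨x, hx⟩, ht r' ⟨y, hy⟩, hinner]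

omit [CompleteSpace H] [TopologicalSpace.SeparableSpace H] in
theorem mem_pow_of_fixes_image {F : Submodule ℂ H} {n : ℕ} (hsym : W⁻¹ = W)
    (hF : ∀ u : H ≃ₗᵢ[ℂ] H, (∀ x ∈ F, u x = x) → u ∈ W ^ n) {t u : H ≃ₗᵢ[ℂ] H} (ht : t ∈ W ^ 2)
    (hu : ∀ x ∈ F, u (t x) = t x) : u ∈ W ^ (2 + n + 2) := by
  have h : u = t * (t⁻¹ * u * t) * t⁻¹ := by group
  rw [h, pow_add, pow_add]
  refine Set.mul_mem_mul (Set.mul_mem_mul ht (hF _ fun x hx => ?_)) (inv_mem_pow_of_inv_eq hsym ht)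
  change t.symm (u (t x)) = x
  rw [t.symm_apply_eq, hu x hx]

omit [CompleteSpace H] [TopologicalSpace.SeparableSpace H] in
theorem exists_isometry_of_isoclinic {F : Submodule ℂ H} {t : H ≃ₗᵢ[ℂ] H} {C S : ℝ} (hS : 0 < S)
    (hCS : C ^ 2 + S ^ 2 = 1) (ht : ∀ x ∈ F, ∀ y ∈ F, ⟪x, t y⟫_ℂ = C * ⟪x, y⟫_ℂ) :
    ∃ J : F →ₗᵢ[ℂ] H, (∀ x : F, t x = (C : ℂ) • (x : H) + (S : ℂ) • J x) ∧
      ∀ x y : F, ⟪(x : H), J y⟫_ℂ = 0 := by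
  have hS0 : (S : ℂ) ≠ 0 := by exact_mod_cast hS.ne'
  have hCS' : (C : ℂ) ^ 2 + S ^ 2 = 1 := by exact_mod_cast hCS
  have ht' : ∀ x ∈ F, ∀ y ∈ F, ⟪t x, y⟫_ℂ = C * ⟪x, y⟫_ℂ := fun x hx y hy => by
    rw [← inner_conj_symm, ht y hy x hx, map_mul, Complex.conj_ofReal, inner_conj_symm]
  let f : F →ₗ[ℂ] H :=
    (S : ℂ)⁻¹ • (t.toLinearEquiv.toLinearMap.comp F.subtype - (C : ℂ) • F.subtype)
  have hf : ∀ x : F, f x = (S : ℂ)⁻¹ • (t x - (C : ℂ) • (x : H)) := fun x => rfl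
  have hin : ∀ x y : F, ⟪f x, f y⟫_ℂ = ⟪x, y⟫_ℂ := by
    intro x y
    simp only [hf, inner_smul_left, inner_smul_right, inner_sub_left, inner_sub_right,
      t.inner_map_map, ht x x.2 y y.2, ht' x x.2 y y.2, map_inv₀, Complex.conj_ofReal,
      Submodule.coe_inner]
    field_simp
    linear_combination (-⟪(x : H), (y : H)⟫_ℂ) * hCS'
  refine ⟨f.isometryOfInner hin, fun x => ?_, fun x y => ?_⟩
  · change _ = (C : ℂ) • (x : H) + (S : ℂ) • f x
    rw [hf, smul_inv_smul₀ hS0, add_sub_cancel]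
  · change ⟪(x : H), f y⟫_ℂ = 0
    rw [hf, inner_smul_right, inner_sub_right, ht x x.2 y y.2, inner_smul_right, sub_self, mul_zero]

omit [CompleteSpace H] [TopologicalSpace.SeparableSpace H] in
theorem exists_isometry_rotate {F : Submodule ℂ H} {t : H ≃ₗᵢ[ℂ] H} {C S : ℝ}
    (hCS : C ^ 2 + S ^ 2 = 1) {J : F →ₗᵢ[ℂ] H}
    (hJ : ∀ x : F, t x = (C : ℂ) • (x : H) + (S : ℂ) • J x)
    (hJ' : ∀ x y : F, ⟪(x : H), J y⟫_ℂ = 0) :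
    ∃ Q : F →ₗᵢ[ℂ] H, (∀ x : F, Q x = (C : ℂ) • J x - (S : ℂ) • (x : H)) ∧
      ∀ x y : F, ⟪t x, Q y⟫_ℂ = 0 := by
  have hCS' : (C : ℂ) ^ 2 + S ^ 2 = 1 := by exact_mod_cast hCS
  have hJ'' : ∀ x y : F, ⟪J x, (y : H)⟫_ℂ = 0 := fun x y => inner_eq_zero_symm.1 (hJ' y x)
  let f : F →ₗ[ℂ] H := (C : ℂ) • J.toLinearMap - (S : ℂ) • F.subtype
  have hf : ∀ x : F, f x = (C : ℂ) • J x - (S : ℂ) • (x : H) := fun x => rfl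
  refine ⟨f.isometryOfInner fun x y => ?_, hf, fun x y => ?_⟩
  · simp only [hf, inner_smul_left, inner_smul_right, inner_sub_left, inner_sub_right,
      J.inner_map_map, hJ', hJ'', Complex.conj_ofReal, Submodule.coe_inner]
    linear_combination ⟪(x : H), (y : H)⟫_ℂ * hCS'
  · change ⟪t x, f y⟫_ℂ = 0
    simp only [hf, hJ, inner_smul_left, inner_smul_right, inner_add_left, inner_sub_right,
      J.inner_map_map, hJ', hJ'', Complex.conj_ofReal, Submodule.coe_inner]
    ring

theorem exists_mem_pow_rotate (hinf : ¬ FiniteDimensional ℂ H) (hsym : W⁻¹ = W)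
    {F : Submodule ℂ H} [FiniteDimensional ℂ F] {n : ℕ}
    (hF : ∀ u : H ≃ₗᵢ[ℂ] H, (∀ x ∈ F, u x = x) → u ∈ W ^ n) {t : H ≃ₗᵢ[ℂ] H} (ht : t ∈ W ^ 2)
    {C S : ℝ} (hCS : C ^ 2 + S ^ 2 = 1) {J : F →ₗᵢ[ℂ] H}
    (hJ : ∀ x : F, t x = (C : ℂ) • (x : H) + (S : ℂ) • J x)
    (hJ' : ∀ x y : F, ⟪(x : H), J y⟫_ℂ = 0) {d e : F →L[ℂ] F}
    (hde : star d * d + star e * e = 1) :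
    ∃ h ∈ W ^ (2 + n + 2), ∃ R : F →ₗᵢ[ℂ] H, (∀ x y : F, ⟪(x : H), R y⟫_ℂ = 0) ∧
      (∀ x : F, h x = ((C : ℂ) ^ 2 • x + (S : ℂ) ^ 2 • d x : F) +
        ((S : ℂ) * C) • J (x - d x) - (S : ℂ) • R (e x)) ∧
      ∀ x : F, h (J x) = (((S : ℂ) * C) • (x - d x) : F) +
        J ((S : ℂ) ^ 2 • x + (C : ℂ) ^ 2 • d x) + (C : ℂ) • R (e x) := by
  have hCS' : (C : ℂ) ^ 2 + S ^ 2 = 1 := by exact_mod_cast hCS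
  obtain ⟨Q, hQ, htQ⟩ := exists_isometry_rotate hCS hJ hJ'
  have : FiniteDimensional ℂ (F ⊔ LinearMap.range J.toLinearMap : Submodule ℂ H) :=
    Submodule.finiteDimensional_sup _ _
  obtain ⟨j, hj⟩ := exists_isometry_orthogonal hinf (F ⊔ LinearMap.range J.toLinearMap)
  have hjF : ∀ x : F, ∀ y, ⟪(x : H), j y⟫_ℂ = 0 := fun x => hj _ (Submodule.mem_sup_left x.2)
  have hjJ : ∀ (x : F) y, ⟪J x, j y⟫_ℂ = 0 := fun x => hj _ (Submodule.mem_sup_right ⟨x, rfl⟩)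
  obtain ⟨h, hP, hhQ⟩ := exists_unitary_fixing_of_isometries hinf
    (P := t.toLinearIsometry.comp F.subtypeₗᵢ) (Q := Q) (R := j.comp F.subtypeₗᵢ) htQ
    (fun x y => by
      change ⟪t x, j y⟫_ℂ = 0
      rw [hJ, inner_add_left, inner_smul_left, inner_smul_left, hjF, hjJ]; simp)
    (fun x y => by
      change ⟪Q x, j y⟫_ℂ = 0
      rw [hQ, inner_sub_left, inner_smul_left, inner_smul_left, hjF, hjJ]; simp) hde
  have hP' : ∀ x : F, h (t x) = t x := hP
  have h1 : ∀ x : F, (x : H) = (C : ℂ) • t x - (S : ℂ) • Q x := fun x => by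
    rw [hJ, hQ]
    conv_lhs => rw [← one_smul ℂ (x : H), ← hCS']
    module
  have h2 : ∀ x : F, J x = (S : ℂ) • t x + (C : ℂ) • Q x := fun x => by
    rw [hJ, hQ]
    conv_lhs => rw [← one_smul ℂ (J x), ← hCS']
    module
  refine ⟨h, mem_pow_of_fixes_image hsym hF ht fun x hx => hP' ⟨x, hx⟩, j.comp F.subtypeₗᵢ,
    fun x y => hjF x y, fun x => ?_, fun x => ?_⟩
  · conv_lhs => rw [h1 x]
    rw [map_sub, map_smul, map_smul, hP', hhQ, hJ, hQ]
    simp only [map_sub, Submodule.coe_add, Submodule.coe_smul]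
    module
  · conv_lhs => rw [h2 x]
    rw [map_add, map_smul, map_smul, hP', hhQ, hJ, hQ]
    simp only [map_add, map_smul, Submodule.coe_sub, Submodule.coe_smul]
    module

omit [CompleteSpace H] [TopologicalSpace.SeparableSpace H] in
theorem exists_unitary_pair_of_finiteDimensional [FiniteDimensional ℂ H] [CompleteSpace H]
    {C S : ℝ} (hS : 0 < S) (hCS : C ^ 2 + S ^ 2 = 1) {v : H →L[ℂ] H}
    (hv : v ∈ unitary (H →L[ℂ] H)) (hv1 : ‖v - 1‖ ≤ S ^ 2) :
    ∃ z w : H →L[ℂ] H, star z * z = 1 ∧ star w * w = 1 ∧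
      (∀ x, (C : ℂ) ^ 2 • ((C : ℂ) ^ 2 • x + (S : ℂ) ^ 2 • z x) +
          (S : ℂ) ^ 2 • z ((C : ℂ) ^ 2 • x + (S : ℂ) ^ 2 • z x) +
        ((S : ℂ) * C) ^ 2 • (w (x - z x) - z (w (x - z x))) = v x) ∧
      ∀ x, (C : ℂ) ^ 2 • x + (S : ℂ) ^ 2 • z x - z ((C : ℂ) ^ 2 • x + (S : ℂ) ^ 2 • z x) +
        ((S : ℂ) ^ 2 • w (x - z x) + (C : ℂ) ^ 2 • z (w (x - z x))) = 0 := by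
  have hfin := Module.End.finite_spectrum (K := ℂ) (v : H →ₗ[ℂ] H)
  rw [← AlgEquiv.spectrum_eq (Module.End.toContinuousLinearMap (𝕜 := ℂ) H)] at hfin
  obtain ⟨z, w, hz, hw, h₁, h₂⟩ := exists_unitary_pair hS hCS hv hfin hv1
  exact ⟨z, w, hz, hw, DFunLike.congr_fun h₁, DFunLike.congr_fun h₂⟩

theorem exists_mem_pow_extending_unitary (hinf : ¬ FiniteDimensional ℂ H) (hsym : W⁻¹ = W)
    {F : Submodule ℂ H} [FiniteDimensional ℂ F] {n : ℕ}
    (hF : ∀ u : H ≃ₗᵢ[ℂ] H, (∀ x ∈ F, u x = x) → u ∈ W ^ n) {t : H ≃ₗᵢ[ℂ] H} (ht : t ∈ W ^ 2)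
    {C S : ℝ} (hS : 0 < S) (hCS : C ^ 2 + S ^ 2 = 1) {J : F →ₗᵢ[ℂ] H}
    (hJ : ∀ x : F, t x = (C : ℂ) • (x : H) + (S : ℂ) • J x)
    (hJ' : ∀ x y : F, ⟪(x : H), J y⟫_ℂ = 0) {v : F →L[ℂ] F}
    (hv : v ∈ unitary (F →L[ℂ] F)) (hv1 : ‖v - 1‖ ≤ S ^ 2) :
    ∃ g ∈ W ^ (2 + n + 2 + n + (2 + n + 2)), ∀ x : F, g x = v x := by
  obtain ⟨z, w, hz, hw, hE₁, hE₂⟩ := exists_unitary_pair_of_finiteDimensional hS hCS hv hv1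
  obtain ⟨h, hh, R, -, hx, hhJ⟩ := exists_mem_pow_rotate hinf hsym hF ht hCS hJ hJ'
    (d := z) (e := 0) (by simpa using hz)
  have : FiniteDimensional ℂ (F ⊔ LinearMap.range J.toLinearMap : Submodule ℂ H) :=
    Submodule.finiteDimensional_sup _ _
  obtain ⟨j, hj⟩ := exists_isometry_orthogonal hinf (F ⊔ LinearMap.range J.toLinearMap)
  obtain ⟨k, hk, hkJ⟩ := exists_unitary_fixing_of_isometries hinf
    (P := F.subtypeₗᵢ) (Q := J) (R := j.comp F.subtypeₗᵢ) hJ'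
    (fun x y => hj _ (Submodule.mem_sup_left x.2) y)
    (fun x y => hj _ (Submodule.mem_sup_right ⟨x, rfl⟩) y) (d := w) (e := 0) (by simpa using hw)
  have hk' : ∀ x : F, k x = x := hk
  simp only [zero_apply, map_zero, smul_zero, add_zero, sub_zero] at hx hhJ hkJ
  refine ⟨h * k * h, ?_, fun x => ?_⟩
  · rw [pow_add, pow_add]
    exact Set.mul_mem_mul (Set.mul_mem_mul hh (hF k fun x hx => hk' ⟨x, hx⟩)) hh
  · change h (k (h x)) = v x
    rw [hx, map_add, map_smul, hk', hkJ, map_add, map_smul, hx, hhJ, ← hE₁]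
    have e₃ := congrArg (fun y => ((S : ℂ) * C) • J y) (hE₂ x)
    simp only [map_zero, smul_zero] at e₃
    rw [← sub_eq_zero, ← e₃]
    simp only [map_sub, map_add, map_smul, Submodule.coe_add, Submodule.coe_sub, Submodule.coe_smul]
    module

omit [CompleteSpace H] [TopologicalSpace.SeparableSpace H] in
theorem exists_polar_decomposition_of_completeSpace [CompleteSpace H]
    {S : ℝ} (hS : 0 < S) (hS1 : S ≤ 1) {c : H →L[ℂ] H} (hc : ‖c‖ ≤ 1)
    (hc1 : ‖c - 1‖ < S ^ 2 / 3) :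
    ∃ v d e : H →L[ℂ] H, v ∈ unitary (H →L[ℂ] H) ∧ ‖v - 1‖ ≤ S ^ 2 ∧
      star d * d + star e * e = 1 ∧ Function.Surjective v ∧ (∀ x y, ⟪v x, v y⟫_ℂ = ⟪x, y⟫_ℂ) ∧
      ∀ x, c x = v (x - (S : ℂ) ^ 2 • (x - d x)) := by
  obtain ⟨v, d, e, hv, hv1, hde, h⟩ := exists_polar_decomposition hS hS1 hc hc1
  refine ⟨v, d, e, hv, hv1, hde, fun x => ⟨star v x, DFunLike.congr_fun hv.2 x⟩, fun x y => ?_,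
    DFunLike.congr_fun h⟩
  rw [← ContinuousLinearMap.adjoint_inner_right v]
  exact congrArg (fun z => ⟪x, z⟫_ℂ) (DFunLike.congr_fun hv.1 y)

omit [CompleteSpace H] [TopologicalSpace.SeparableSpace H] in
theorem exists_compression (F : Submodule ℂ H) [FiniteDimensional ℂ F] (u : H ≃ₗᵢ[ℂ] H) :
    ∃ c : F →L[ℂ] F, ‖c‖ ≤ 1 ∧ ‖c - 1‖ ≤ ‖u.toLinearIsometry.toContinuousLinearMap - 1‖ ∧
      ∀ x y : F, ⟪x, c y⟫_ℂ = ⟪(x : H), u y⟫_ℂ := by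
  have key : ∀ T : H →L[ℂ] H, ‖F.orthogonalProjectionOnto ∘L T ∘L F.subtypeL‖ ≤ ‖T‖ := fun T => by
    refine ContinuousLinearMap.opNorm_le_bound _ (norm_nonneg _) fun x => ?_
    exact (F.norm_orthogonalProjectionOnto_apply_le _).trans (T.le_opNorm x)
  refine ⟨F.orthogonalProjectionOnto ∘L u.toLinearIsometry.toContinuousLinearMap ∘L F.subtypeL,
    (key _).trans u.toLinearIsometry.norm_toContinuousLinearMap_le, ?_, fun x y =>
      F.inner_orthogonalProjectionOnto_eq_of_mem_left x (u y)⟩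
  convert key (u.toLinearIsometry.toContinuousLinearMap - 1)
  ext x
  simp

theorem exists_eq_mul_mul_of_inner_eq (hinf : ¬ FiniteDimensional ℂ H) {F : Submodule ℂ H}
    [FiniteDimensional ℂ F] {b u : H ≃ₗᵢ[ℂ] H}
    (h : ∀ x y : F, ⟪(x : H), b y⟫_ℂ = ⟪(x : H), u y⟫_ℂ) :
    ∃ a c : H ≃ₗᵢ[ℂ] H, (∀ x ∈ F, a x = x) ∧ (∀ x ∈ F, c x = x) ∧ u = a * b * c := by
  have h' : ∀ x y : F, ⟪b x, (y : H)⟫_ℂ = ⟪u x, (y : H)⟫_ℂ := fun x y => by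
    rw [← inner_conj_symm, h, inner_conj_symm]
  have hcod : ∀ g : H ≃ₗᵢ[ℂ] H,
      HasInfiniteCodim (Sum.elim (fun x : F => (x : H)) fun x : F => g x) := fun g => by
    have : FiniteDimensional ℂ (F ⊔ F.map g.toLinearEquiv.toLinearMap : Submodule ℂ H) :=
      Submodule.finiteDimensional_sup _ _
    refine hasInfiniteCodim_of_finiteDimensional hinf (F ⊔ F.map g.toLinearEquiv.toLinearMap) ?_
    rintro (x | x)
    · exact Submodule.mem_sup_left x.2
    · exact Submodule.mem_sup_right ⟨x, x.2, rfl⟩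
  obtain ⟨a, ha⟩ := exists_unitary_of_inner_eq (by
    rintro (x | x) (y | y)
    · rfl
    · exact h x y
    · exact h' x y
    · exact (b.inner_map_map _ _).trans (u.inner_map_map _ _).symm) (hcod b) (hcod u)
  refine ⟨a, (a * b)⁻¹ * u, fun x hx => ha (Sum.inl ⟨x, hx⟩), fun x hx => ?_, by group⟩
  change (a * b).symm (u x) = x
  rw [LinearIsometryEquiv.symm_apply_eq]
  exact (ha (Sum.inr ⟨x, hx⟩)).symm

theorem mem_pow_of_norm_sub_one_lt (hinf : ¬ FiniteDimensional ℂ H) (hsym : W⁻¹ = W)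
    {F : Submodule ℂ H} [FiniteDimensional ℂ F] {n : ℕ}
    (hF : ∀ u : H ≃ₗᵢ[ℂ] H, (∀ x ∈ F, u x = x) → u ∈ W ^ n) {t : H ≃ₗᵢ[ℂ] H} (ht : t ∈ W ^ 2)
    {C S : ℝ} (hS : 0 < S) (hCS : C ^ 2 + S ^ 2 = 1)
    (hCt : ∀ x ∈ F, ∀ y ∈ F, ⟪x, t y⟫_ℂ = C * ⟪x, y⟫_ℂ) {u : H ≃ₗᵢ[ℂ] H}
    (hu : ‖u.toLinearIsometry.toContinuousLinearMap - 1‖ < S ^ 2 / 3) :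
    u ∈ W ^ (n + (2 + n + 2 + n + (2 + n + 2) + (2 + n + 2)) + n) := by
  have hCS' : (C : ℂ) ^ 2 + S ^ 2 = 1 := by exact_mod_cast hCS
  obtain ⟨J, hJ, hJ'⟩ := exists_isometry_of_isoclinic hS hCS hCt
  obtain ⟨c, hc, hc1, hcu⟩ := exists_compression F u
  obtain ⟨v, d, e, hv, hv1, hde, hsurj, hvv, hcv⟩ :=
    exists_polar_decomposition_of_completeSpace hS (by nlinarith [sq_nonneg C]) hc (hc1.trans_lt hu)
  obtain ⟨g, hg, hgv⟩ := exists_mem_pow_extending_unitary hinf hsym hF ht hS hCS hJ hJ' hv hv1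
  obtain ⟨p, hp, R, hR, hpx, -⟩ := exists_mem_pow_rotate hinf hsym hF ht hCS hJ hJ' hde
  obtain ⟨a, c', ha, hc', rfl⟩ := exists_eq_mul_mul_of_inner_eq hinf (b := g * p) (u := u)
    fun x y => by
      obtain ⟨x, rfl⟩ := hsurj x
      rw [← hcu, hcv, hvv, ← hgv]
      change ⟪g x, g (p y)⟫_ℂ = _
      have e₁ : (C : ℂ) ^ 2 • y + (S : ℂ) ^ 2 • d y = y - (S : ℂ) ^ 2 • (y - d y) := by
        rw [← eq_sub_iff_add_eq] at hCS'
        rw [hCS']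
        module
      rw [g.inner_map_map, hpx, e₁, inner_sub_right, inner_add_right, inner_smul_right,
        inner_smul_right, hJ', hR, mul_zero, mul_zero, add_zero, sub_zero, Submodule.coe_inner]
  rw [pow_add, pow_add _ n, pow_add _ (2 + n + 2 + n + (2 + n + 2))]
  exact Set.mul_mem_mul (Set.mul_mem_mul (hF a ha) (Set.mul_mem_mul hg hp)) (hF c' hc')

end FiniteDimensional

/-- Let `H` be an infinite-dimensional separable complex Hilbert space and `W` a symmetric
countably syndetic subset of `U(H)`. Then there exists `ε > 0` such that the open ball of
radius `ε` around the identity in the operator norm is contained in `W ^ 496`. -/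
theorem norm_ball_subset_pow
    {H : Type*} [NormedAddCommGroup H] [InnerProductSpace ℂ H] [CompleteSpace H]
    [TopologicalSpace.SeparableSpace H] (hinf : ¬ FiniteDimensional ℂ H)
    (W : Set (H ≃ₗᵢ[ℂ] H)) (hsym : W⁻¹ = W)
    (hsynd : ∃ s : ℕ → (H ≃ₗᵢ[ℂ] H), ∀ g : (H ≃ₗᵢ[ℂ] H), ∃ n : ℕ, g ∈ s n • W) :
    ∃ ε : ℝ, 0 < ε ∧
      ∀ u : H ≃ₗᵢ[ℂ] H, ‖u.toLinearIsometry.toContinuousLinearMap - 1‖ < ε →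
        u ∈ W ^ 496 := by
  obtain ⟨s, hs⟩ := hsynd
  obtain ⟨F, hFd, hF⟩ := exists_finiteDimensional_forall_mem_pow_forty hinf hsym hs
  obtain ⟨t, ht, C, S, hS, hCS, hCt⟩ := exists_isoclinic_mem_sq hinf hsym hs F
  refine ⟨S ^ 2 / 3, by positivity, fun u hu => ?_⟩
  obtain ⟨n, w, hw, -⟩ := hs 1
  have h1 : (1 : H ≃ₗᵢ[ℂ] H) ∈ W ^ 2 := by
    rw [pow_two, ← inv_mul_cancel w]
    exact Set.mul_mem_mul (hsym ▸ Set.inv_mem_inv.2 hw) hw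
  have h2 := Set.mul_mem_mul (mem_pow_of_norm_sub_one_lt hinf hsym hF ht hS hCS hCt hu)
    (Set.pow_mem_pow (n := 122) h1)
  rwa [one_pow, mul_one, ← pow_mul, ← pow_add] at h2
end
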